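/- arXiv:2601.15318 — 2 statements merged into one kernel-verified Lean document; each statement's English description precedes it below -/
import Mathlib

section
/- The number M_n of n×n matrices with entries in {0,1} that are invertible over ℝ and whose unique solution x of Mx = 𝟙 is componentwise strictly positive satisfies M_n ∼ 2^{n²−n+1}, i.e., lim_{n→∞} M_n / 2^{n²−n+1} = 1. -/
open Matrix

/-- `M_n`: the number of `n×n` matrices with entries in `{0,1}` that are invertible
over `ℝ` and whose unique solution `x = M⁻¹ 𝟙` of `M x = 𝟙` is componentwise
strictly positive. -/
noncomputable def Mcard (n : ℕ) : ℕ :=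
  Nat.card {M : Matrix (Fin n) (Fin n) ℝ //
    (∀ i j, M i j = 0 ∨ M i j = 1) ∧ IsUnit M ∧
      ∀ j, 0 < (M⁻¹ *ᵥ (1 : Fin n → ℝ)) j}


namespace SignMat

/-- The sign attached to a Boolean. -/
def sg (b : Bool) : ℤ := if b then 1 else -1

/-- Signed sum. -/
def dot {n : ℕ} (e : Fin n → Bool) (w : Fin n → ℤ) : ℤ := ∑ i, sg (e i) * w i

/-- Sign vectors orthogonal to `w` modulo `N`. -/
def K {n : ℕ} (N : ℕ) (w : Fin n → ℤ) : Finset (Fin n → Bool) :=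
  Finset.univ.filter fun e => (N : ℤ) ∣ dot e w

/-- The cosine of the residue `x` modulo `N`. -/
noncomputable def c (N : ℕ) (x : ℤ) : ℝ := Real.cos (2 * Real.pi * x / N)

/-- Absolute value of the characteristic function. -/
noncomputable def F {n : ℕ} (N : ℕ) (w : Fin n → ℤ) : ℝ := ∏ i, |c N (w i)|

lemma sum_c (N : ℕ) (hN : 0 < N) (s : ℤ) :
    ∑ r ∈ Finset.range N, c N (r * s) = if (N : ℤ) ∣ s then (N : ℝ) else 0 := by
  have hN' : (N : ℂ) ≠ 0 := by exact_mod_cast hN.ne'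
  set z : ℂ := Complex.exp (2 * Real.pi * Complex.I * s / N) with hz
  have h1 : ∀ r : ℕ, c N (r * s) = (z ^ r).re := by
    intro r
    rw [hz, ← Complex.exp_nat_mul, c]
    have : (r : ℂ) * (2 * Real.pi * Complex.I * s / N)
        = ((2 * Real.pi * ((r * s : ℤ) : ℝ) / N : ℝ) : ℂ) * Complex.I := by
      push_cast; ring
    rw [this, Complex.exp_ofReal_mul_I_re]
  have h2 : ∑ r ∈ Finset.range N, c N (r * s) = (∑ r ∈ Finset.range N, z ^ r).re := by
    rw [Complex.re_sum]; exact Finset.sum_congr rfl fun r _ => h1 r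
  rw [h2]
  have hI : (2 * Real.pi * Complex.I : ℂ) ≠ 0 := Complex.two_pi_I_ne_zero
  split_ifs with h
  · obtain ⟨m, rfl⟩ := h
    have : z = 1 := by
      rw [hz, Complex.exp_eq_one_iff]
      refine ⟨m, ?_⟩
      push_cast; field_simp
    simp [this]
  · have hz1 : z ≠ 1 := by
      intro h0
      rw [hz, Complex.exp_eq_one_iff] at h0
      obtain ⟨m, hm⟩ := h0
      apply h
      refine ⟨m, ?_⟩
      have : (s : ℂ) = N * m := by
        field_simp at hm
        exact hm
      exact_mod_cast this
    have hzN : z ^ N = 1 := by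
      rw [hz, ← Complex.exp_nat_mul, Complex.exp_eq_one_iff]
      refine ⟨s, ?_⟩
      field_simp
    rw [geom_sum_eq hz1, hzN]; simp

lemma sum_cos_dot {n : ℕ} (t : ℝ) (w : Fin n → ℤ) :
    ∑ e : Fin n → Bool, Real.cos (t * (dot e w : ℤ)) = 2 ^ n * ∏ i, Real.cos (t * w i) := by
  have key : ∑ e : Fin n → Bool, Complex.exp ((t * (dot e w : ℤ) : ℝ) * Complex.I)
      = ((2 ^ n * ∏ i, Real.cos (t * w i) : ℝ) : ℂ) := by
    have h1 : ∀ e : Fin n → Bool, Complex.exp ((t * (dot e w : ℤ) : ℝ) * Complex.I)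
        = ∏ i, Complex.exp ((t * sg (e i) * w i : ℝ) * Complex.I) := by
      intro e
      rw [← Complex.exp_sum, dot]
      congr 1
      push_cast
      rw [Finset.mul_sum, Finset.sum_mul]
      exact Finset.sum_congr rfl fun i _ => by ring
    simp_rw [h1]
    have := Finset.prod_univ_sum (fun _ : Fin n => (Finset.univ : Finset Bool))
      (fun i b => Complex.exp ((t * sg b * w i : ℝ) * Complex.I))
    rw [Fintype.piFinset_univ] at this
    rw [← this]
    push_cast
    have h2 : (2 : ℂ) ^ n = ∏ _i : Fin n, 2 := by simp
    rw [h2, ← Finset.prod_mul_distrib]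
    refine Finset.prod_congr rfl fun i _ => ?_
    rw [Complex.two_cos]
    simp [sg]
  have := congrArg Complex.re key
  rw [Complex.re_sum, Complex.ofReal_re] at this
  rw [← this]
  exact Finset.sum_congr rfl fun e _ => (Complex.exp_ofReal_mul_I_re _).symm

lemma card_K {n : ℕ} (N : ℕ) (hN : 0 < N) (w : Fin n → ℤ) :
    ((K N w).card : ℝ) * N = 2 ^ n * ∑ r ∈ Finset.range N, ∏ i, c N (r * w i) := by
  have h1 : ((K N w).card : ℝ) * N
      = ∑ e : Fin n → Bool, ∑ r ∈ Finset.range N, c N (r * dot e w) := by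
    simp_rw [sum_c N hN]
    rw [← Finset.sum_filter, Finset.sum_const, nsmul_eq_mul, K]
  rw [h1, Finset.sum_comm, Finset.mul_sum]
  refine Finset.sum_congr rfl fun r _ => ?_
  have := sum_cos_dot (2 * Real.pi * r / N) w
  convert this using 2
  · simp only [c]; congr 1; push_cast; ring
  · refine Finset.prod_congr rfl fun i _ => ?_
    simp only [c]; congr 1; push_cast; ring

/-- `w` has all nontrivial Fourier coefficients below `η` at modulus `N`. -/
def G {n : ℕ} (η : ℝ) (N : ℕ) (w : Fin n → ℤ) : Prop :=
  ∀ r ∈ Finset.range N, r ≠ 0 → F N (fun i => r * w i) < η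

lemma card_K_le {n : ℕ} (N : ℕ) (hN : 0 < N) (η : ℝ) (hη : 0 ≤ η) (w : Fin n → ℤ) (h : G η N w) :
    ((K N w).card : ℝ) ≤ 2 ^ n * (1 / N + η) := by
  have hN' : (0 : ℝ) < N := by exact_mod_cast hN
  have h1 := card_K N hN w
  have h2 : ∑ r ∈ Finset.range N, ∏ i, c N (r * w i) ≤ 1 + N * η := by
    obtain ⟨m, rfl⟩ : ∃ m, N = m + 1 := ⟨N - 1, by omega⟩
    rw [Finset.sum_range_succ']
    have h3 : ∑ r ∈ Finset.range m, ∏ i, c (m+1) (((r + 1 : ℕ) : ℤ) * w i)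
        ≤ ∑ r ∈ Finset.range m, η := by
      refine Finset.sum_le_sum fun r hr => ?_
      have := h (r + 1) (by simpa using hr) (by omega)
      refine le_trans (le_abs_self _) ?_
      rw [Finset.abs_prod]
      exact this.le
    have h4 : ∏ i, c (m+1) (((0 : ℕ) : ℤ) * w i) = 1 := by
      simp [c]
    rw [h4]
    simp only [Finset.sum_const, Finset.card_range, nsmul_eq_mul] at h3
    have h6 : ((m + 1 : ℕ) : ℝ) * η = m * η + η := by push_cast; ring
    linarith
  have h5 : ((K N w).card : ℝ) * N ≤ 2 ^ n * (1 + N * η) := by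
    rw [h1]; gcongr
  calc ((K N w).card : ℝ) = ((K N w).card : ℝ) * N / N := by field_simp
    _ ≤ 2 ^ n * (1 + N * η) / N := by gcongr
    _ = _ := by field_simp

lemma c_pow_six (N : ℕ) (x : ℤ) :
    c N x ^ 6 = (10 + 15 * c N (2 * x) + 6 * c N (4 * x) + c N (6 * x)) / 32 := by
  have e2 : c N (2 * x) = 2 * c N x ^ 2 - 1 := by
    simp only [c]; rw [← Real.cos_two_mul]; congr 1; push_cast; ring
  have e4 : c N (4 * x) = 2 * c N (2 * x) ^ 2 - 1 := by
    simp only [c]; rw [← Real.cos_two_mul]; congr 1; push_cast; ring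
  have e6 : c N (6 * x) = 4 * c N (2 * x) ^ 3 - 3 * c N (2 * x) := by
    simp only [c]; rw [← Real.cos_three_mul]; congr 1; push_cast; ring
  rw [e6, e4, e2]; ring

lemma sum_c_six (N : ℕ) (hN : 0 < N) (r : ℤ) :
    ∑ x ∈ Finset.range N, c N (r * x) ^ 6 =
      (10 * N + 15 * (if (N : ℤ) ∣ 2 * r then (N : ℝ) else 0)
        + 6 * (if (N : ℤ) ∣ 4 * r then (N : ℝ) else 0)
        + (if (N : ℤ) ∣ 6 * r then (N : ℝ) else 0)) / 32 := by
  simp_rw [c_pow_six, ← sum_c N hN]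
  rw [← Finset.sum_div, Finset.sum_add_distrib, Finset.sum_add_distrib, Finset.sum_add_distrib,
    ← Finset.mul_sum, ← Finset.mul_sum]
  simp only [Finset.sum_const, Finset.card_range, nsmul_eq_mul]
  congr 1
  have : ∀ a : ℤ, ∑ x ∈ Finset.range N, c N (a * (r * x)) = ∑ x ∈ Finset.range N, c N (x * (a * r)) := by
    intro a
    exact Finset.sum_congr rfl fun x _ => by congr 1; ring
  simp only [this]; ring

lemma sum_c_six_big (j : ℕ) (hj : 2 ≤ j) (r : ℤ) (hr : ¬ (3 : ℤ) ∣ r) :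
    ∑ x ∈ Finset.range (3 ^ j), c (3 ^ j) (r * x) ^ 6 = 5 / 16 * (3 : ℝ) ^ j := by
  have h9 : (9 : ℤ) ∣ ((3 ^ j : ℕ) : ℤ) := by
    push_cast
    exact (pow_dvd_pow (3 : ℤ) hj : (3 : ℤ) ^ 2 ∣ 3 ^ j)
  rw [sum_c_six _ (by positivity), if_neg, if_neg, if_neg]
  · push_cast; ring
  all_goals
    intro h
    have := h9.trans h
    omega

lemma sum_c_six_three (r : ℤ) (hr : ¬ (3 : ℤ) ∣ r) :
    ∑ x ∈ Finset.range 3, c 3 (r * x) ^ 6 = 33 / 32 := by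
  rw [sum_c_six _ (by positivity), if_neg, if_neg, if_pos]
  · push_cast; ring
  · push_cast; omega
  · push_cast; omega
  · push_cast; omega

/-- Lift of a residue vector. -/
def lift {n N : ℕ} (w : Fin n → Fin N) : Fin n → ℤ := fun i => ((w i : ℕ) : ℤ)

lemma card_bad {n : ℕ} (N : ℕ) (η : ℝ) (hη : 0 < η) (r : ℤ) :
    (((Finset.univ : Finset (Fin n → Fin N)).filter
      fun w => η ≤ F N (fun i => r * lift w i)).card : ℝ)
      ≤ η⁻¹ ^ 6 * (∑ x ∈ Finset.range N, c N (r * x) ^ 6) ^ n := by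
  have h1 : (∑ x ∈ Finset.range N, c N (r * x) ^ 6) ^ n
      = ∑ w : Fin n → Fin N, (F N (fun i => r * lift w i)) ^ 6 := by
    rw [Finset.sum_range (fun x : ℕ => c N (r * x) ^ 6)]
    have := Finset.prod_univ_sum (fun _ : Fin n => (Finset.univ : Finset (Fin N)))
      (fun _ x => c N (r * ((x : ℕ) : ℤ)) ^ 6)
    rw [Fintype.piFinset_univ] at this
    simp only [Finset.prod_const, Finset.card_univ, Fintype.card_fin] at this
    rw [this]
    refine Finset.sum_congr rfl fun w _ => ?_
    rw [F, ← Finset.prod_pow]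
    refine Finset.prod_congr rfl fun i _ => ?_
    simp only [lift]
    exact (Even.pow_abs (by decide) _).symm
  rw [h1, Finset.mul_sum, Finset.card_eq_sum_ones, Nat.cast_sum, Finset.sum_filter]
  refine Finset.sum_le_sum fun w _ => ?_
  have h0 : 0 ≤ F N (fun i => r * lift w i) := Finset.prod_nonneg fun i _ => abs_nonneg _
  split_ifs with h
  · rw [← mul_pow]
    push_cast
    refine one_le_pow₀ ?_
    rw [inv_mul_eq_div, le_div_iff₀ hη]; linarith
  · positivity

end SignMat

namespace SignMat

lemma c_congr (N : ℕ) (hN : 0 < N) (x y : ℤ) (h : (N : ℤ) ∣ x - y) : c N x = c N y := by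
  obtain ⟨m, hm⟩ := h
  have hN' : (N : ℝ) ≠ 0 := by exact_mod_cast hN.ne'
  have hx : x = y + N * m := by linarith
  subst hx
  simp only [c]
  rw [← Real.cos_add_int_mul_two_pi (2 * Real.pi * y / N) m]
  congr 1
  push_cast
  field_simp

lemma F_congr {n : ℕ} (N : ℕ) (hN : 0 < N) (w v : Fin n → ℤ) (h : ∀ i, (N : ℤ) ∣ w i - v i) :
    F N w = F N v := by
  unfold F
  exact Finset.prod_congr rfl fun i _ => by rw [c_congr N hN _ _ (h i)]

lemma G_congr {n : ℕ} (η : ℝ) (N : ℕ) (hN : 0 < N) (w v : Fin n → ℤ)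
    (h : ∀ i, (N : ℤ) ∣ w i - v i) (hG : G η N w) : G η N v := by
  intro r hr hr0
  have := hG r hr hr0
  rwa [F_congr N hN (fun i => r * w i) (fun i => r * v i)] at this
  intro i
  rw [← mul_sub]
  exact (h i).mul_left _

lemma c_three_mul (N : ℕ) (x : ℤ) : c (3 * N) (3 * x) = c N x := by
  simp only [c]
  congr 1
  push_cast
  rw [show 2 * Real.pi * (3 * (x : ℝ)) = 3 * (2 * Real.pi * x) by ring]
  rw [mul_div_mul_left]
  norm_num

lemma level {n : ℕ} (η : ℝ) (j : ℕ) (w : Fin n → ℤ) (h1 : G η (3 ^ j) w)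
    (h2 : ¬ G η (3 ^ (j + 1)) w) :
    ∃ r ∈ Finset.range (3 ^ (j + 1)), ¬ (3 : ℤ) ∣ r ∧ η ≤ F (3 ^ (j + 1)) (fun i => r * w i) := by
  unfold G at h2
  push Not at h2
  obtain ⟨r, hr, hr0, hF⟩ := h2
  refine ⟨r, hr, ?_, hF⟩
  intro h3
  obtain ⟨s, rfl⟩ : 3 ∣ r := by exact_mod_cast h3
  have hs : s ∈ Finset.range (3 ^ j) := by
    rw [Finset.mem_range] at hr ⊢
    rw [pow_succ] at hr; omega
  have := h1 s hs (by omega)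
  have e : F (3 ^ (j + 1)) (fun i => ((3 * s : ℕ) : ℤ) * w i) = F (3 ^ j) (fun i => s * w i) := by
    unfold F
    refine Finset.prod_congr rfl fun i _ => ?_
    change |c (3 ^ (j + 1)) (((3 * s : ℕ) : ℤ) * w i)| = |c (3 ^ j) (s * w i)|
    rw [← c_three_mul (3 ^ j) (s * w i), pow_succ, mul_comm (3 ^ j) 3]
    congr 2
    push_cast; ring
  rw [e] at hF
  linarith

lemma K_mono {n : ℕ} (j : ℕ) (w : Fin n → ℤ) : K (3 ^ (j + 1)) w ⊆ K (3 ^ j) w := by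
  intro e he
  simp only [K, Finset.mem_filter, Finset.mem_univ, true_and] at he ⊢
  refine dvd_trans ?_ he
  push_cast
  exact pow_dvd_pow _ (by omega)

lemma K_congr {n : ℕ} (N : ℕ) (w v : Fin n → ℤ) (h : ∀ i, (N : ℤ) ∣ w i - v i) :
    K N w = K N v := by
  ext e
  simp only [K, Finset.mem_filter, Finset.mem_univ, true_and]
  have : (N : ℤ) ∣ dot e w - dot e v := by
    rw [dot, dot, ← Finset.sum_sub_distrib]
    refine Finset.dvd_sum fun i _ => ?_
    rw [← mul_sub]
    exact (h i).mul_left _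
  exact (Int.dvd_iff_dvd_of_dvd_sub this)

lemma abs_c_three (x : ℤ) (hx : ¬ (3 : ℤ) ∣ x) : |c 3 x| = 1 / 2 := by
  have h1 : c 3 1 = -(1 / 2) := by
    simp only [c]
    rw [show 2 * Real.pi * ((1 : ℤ) : ℝ) / ((3 : ℕ) : ℝ) = Real.pi - Real.pi / 3 by push_cast; ring,
      Real.cos_pi_sub, Real.cos_pi_div_three]
  have h2 : c 3 2 = -(1 / 2) := by
    simp only [c]
    rw [show 2 * Real.pi * ((2 : ℤ) : ℝ) / ((3 : ℕ) : ℝ) = Real.pi / 3 + Real.pi by push_cast; ring,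
      Real.cos_add_pi, Real.cos_pi_div_three]
  have h3 : c 3 x = -(1 / 2) := by
    have : x % 3 = 1 ∨ x % 3 = 2 := by omega
    rcases this with h | h
    · rw [← h1]; exact c_congr 3 (by norm_num) _ _ (by push_cast; omega)
    · rw [← h2]; exact c_congr 3 (by norm_num) _ _ (by push_cast; omega)
  rw [h3]; norm_num

lemma G_three {n : ℕ} (w : Fin n → ℤ) (i : Fin n) (hi : ¬ (3 : ℤ) ∣ w i) : G (51 / 100) 3 w := by
  intro r hr hr0
  rw [Finset.mem_range] at hr
  have h1 : ¬ (3 : ℤ) ∣ r * w i := by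
    intro h
    rcases Int.prime_three.dvd_or_dvd h with h | h
    · omega
    · exact hi h
  unfold F
  rw [← Finset.mul_prod_erase _ _ (Finset.mem_univ i), abs_c_three _ h1]
  have : ∏ x ∈ Finset.univ.erase i, |c 3 (r * w x)| ≤ 1 :=
    Finset.prod_le_one (fun _ _ => abs_nonneg _) fun _ _ => Real.abs_cos_le_one _
  linarith

/-- The integer sign matrix of a Boolean matrix. -/
def smat {n : ℕ} (A : Fin n → Fin n → Bool) : Matrix (Fin n) (Fin n) ℤ :=
  Matrix.of fun i j => sg (A i j)

lemma exists_w {n : ℕ} (A : Fin n → Fin n → Bool) (hA : (smat A).det = 0) (b : ℕ) :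
    ∃ (w : Fin n → ℤ) (i : Fin n), (∀ k, dot (A k) w = 0) ∧ ((3 ^ b : ℕ) : ℤ) ∣ w i - 1 := by
  obtain ⟨v, hv0, hv⟩ := Matrix.exists_mulVec_eq_zero_iff.mpr hA
  have hdot : ∀ k, dot (A k) v = 0 := fun k => by
    have := congrFun hv k
    simpa [Matrix.mulVec, dotProduct, smat, dot] using this
  obtain ⟨i0, hi0⟩ : ∃ i, v i ≠ 0 := Function.ne_iff.mp hv0
  obtain ⟨g, hg, hgcd⟩ := Finset.extract_gcd v (s := Finset.univ) ⟨i0, Finset.mem_univ _⟩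
  have hd : Finset.univ.gcd v ≠ 0 := by
    intro h
    rw [Finset.gcd_eq_zero_iff] at h
    exact hi0 (h i0 (Finset.mem_univ _))
  have hdotg : ∀ k, dot (A k) g = 0 := fun k => by
    have h1 : Finset.univ.gcd v * dot (A k) g = 0 := by
      rw [← hdot k, dot, dot, Finset.mul_sum]
      refine Finset.sum_congr rfl fun i _ => ?_
      rw [hg i (Finset.mem_univ _)]; ring
    exact (mul_eq_zero.mp h1).resolve_left hd
  obtain ⟨i, hi⟩ : ∃ i, ¬ (3 : ℤ) ∣ g i := by
    by_contra! h
    have : (3 : ℤ) ∣ Finset.univ.gcd g := Finset.dvd_gcd fun i _ => h i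
    rw [hgcd] at this
    norm_num at this
  have hcop : IsCoprime (g i) (((3 ^ b : ℕ) : ℤ)) := by
    push_cast
    exact (((Int.prime_three.coprime_iff_not_dvd).mpr hi).symm).pow_right
  obtain ⟨u, t, hut⟩ := hcop
  refine ⟨fun k => u * g k, i, ?_, ?_⟩
  · intro k
    have : dot (A k) (fun k => u * g k) = u * dot (A k) g := by
      rw [dot, dot, Finset.mul_sum]
      exact Finset.sum_congr rfl fun i _ => by ring
    rw [this, hdotg, mul_zero]
  · exact ⟨-t, by linear_combination hut⟩

/-- Singular sign matrices. -/
noncomputable def Sing (n : ℕ) : Finset (Fin n → Fin n → Bool) := by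
  classical exact Finset.univ.filter fun A => (smat A).det = 0

open Classical in
/-- Final vectors. -/
noncomputable def Wfin (n M : ℕ) (η : ℝ) (i : Fin n) : Finset (Fin n → Fin M) :=
  Finset.univ.filter fun w => (w i : ℕ) = 1 ∧ G η M (lift w)

open Classical in
/-- Vectors bad at level `j+1`. -/
noncomputable def Wbad (n j : ℕ) (η : ℝ) (r : ℕ) : Finset (Fin n → Fin (3 ^ (j + 1))) :=
  Finset.univ.filter fun w => η ≤ F (3 ^ (j + 1)) (fun i => r * lift w i) ∧ G η (3 ^ j) (lift w) ∧
    ¬ (3 : ℤ) ∣ r ∧ ∃ i, ¬ (3 : ℤ) ∣ lift w i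

/-- Matrices with all rows in `K`. -/
def P {n : ℕ} (N : ℕ) (w : Fin n → ℤ) : Finset (Fin n → Fin n → Bool) :=
  Fintype.piFinset fun _ => K N w

lemma Sing_subset (n b : ℕ) (hb : 0 < b) (η : ℝ) (hη : 0 < η) :
    Sing n ⊆ (Finset.univ.biUnion fun i => (Wfin n (3 ^ b) η i).biUnion fun w => P (3 ^ b) (lift w))
      ∪ ((Finset.range b).biUnion fun j => (Finset.range (3 ^ (j + 1))).biUnion fun r =>
        (Wbad n j η r).biUnion fun w => P (3 ^ (j + 1)) (lift w)) := by
  classical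
  intro A hA
  have hA' : (smat A).det = 0 := by simpa [Sing] using hA
  obtain ⟨w, i, hw, hi⟩ := exists_w A hA' b
  let red : (N : ℕ) → 0 < N → Fin n → Fin N := fun N hN k =>
    ⟨(w k % N).toNat, by
      have h1 := Int.emod_nonneg (w k) (show (N : ℤ) ≠ 0 by omega)
      have h2 := Int.emod_lt_of_pos (w k) (show (0 : ℤ) < N by omega)
      omega⟩
  have hred : ∀ (N : ℕ) (hN : 0 < N) (k : Fin n), lift (red N hN) k = w k % N := by
    intro N hN k
    have h1 := Int.emod_nonneg (w k) (show (N : ℤ) ≠ 0 by omega)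
    simp [lift, red, Int.toNat_of_nonneg h1]
  have hdvd : ∀ (N : ℕ) (hN : 0 < N) (k : Fin n), (N : ℤ) ∣ w k - lift (red N hN) k := by
    intro N hN k
    rw [hred N hN]
    exact Int.dvd_self_sub_emod
  have hP : ∀ (N : ℕ) (hN : 0 < N), A ∈ P N (lift (red N hN)) := by
    intro N hN
    rw [P, Fintype.mem_piFinset]
    intro k
    rw [← K_congr N w _ (hdvd N hN)]
    simp [K, hw k]
  have h3 : ∀ j, 0 < 3 ^ j := fun j => by positivity
  have h3b : (3 : ℤ) ∣ ((3 ^ b : ℕ) : ℤ) := by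
    push_cast
    exact dvd_pow_self _ hb.ne'
  rw [Finset.mem_union]
  by_cases hG : G η (3 ^ b) w
  · left
    simp only [Finset.mem_biUnion, Finset.mem_univ, true_and]
    refine ⟨i, red _ (h3 b), ?_, hP _ (h3 b)⟩
    simp only [Wfin, Finset.mem_filter, Finset.mem_univ, true_and]
    refine ⟨?_, G_congr _ _ (h3 b) _ _ (hdvd _ (h3 b)) hG⟩
    have h4 := hred _ (h3 b) i
    have h5 : w i % ((3 ^ b : ℕ) : ℤ) = 1 := by
      have h6 : (1 : ℤ) < ((3 ^ b : ℕ) : ℤ) := by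
        exact_mod_cast Nat.one_lt_pow hb.ne' (by norm_num)
      have h7 : w i % ((3 ^ b : ℕ) : ℤ) = 1 % ((3 ^ b : ℕ) : ℤ) :=
        Int.ModEq.symm (Int.modEq_iff_dvd.mpr hi)
      rw [h7, Int.emod_eq_of_lt (by norm_num) h6]
    rw [h5, lift] at h4
    exact_mod_cast h4
  · right
    have hex : ∃ j, ¬ G η (3 ^ j) w := ⟨b, hG⟩
    have hmin := Nat.find_spec hex
    have hlow := fun m hm => Nat.find_min hex (m := m) hm
    have hle := Nat.find_min' hex hG
    set J := Nat.find hex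
    have hJ : J ≠ 0 := by
      intro h
      apply hmin
      rw [h]
      intro r hr hr0
      simp at hr; omega
    obtain ⟨j, hj⟩ : ∃ j, J = j + 1 := ⟨J - 1, by omega⟩
    rw [hj] at hmin hle
    have hGj : G η (3 ^ j) w := by
      have := hlow j (by omega)
      simpa using this
    obtain ⟨r, hr, hr3, hF⟩ := level η j w hGj hmin
    simp only [Finset.mem_biUnion]
    refine ⟨j, Finset.mem_range.mpr (by omega), r, hr, red _ (h3 (j + 1)), ?_, hP _ (h3 (j + 1))⟩
    simp only [Wbad, Finset.mem_filter, Finset.mem_univ, true_and]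
    have hdj := hdvd _ (h3 (j + 1))
    refine ⟨?_, ?_, hr3, i, ?_⟩
    · rwa [← F_congr _ (h3 (j + 1)) (fun i => r * w i)]
      intro k
      rw [← mul_sub]
      exact (hdj k).mul_left _
    · refine G_congr _ _ (h3 j) w _ (fun k => dvd_trans ?_ (hdj k)) hGj
      push_cast
      exact pow_dvd_pow _ (by omega)
    · have h5 : (3 : ℤ) ∣ w i - lift (red _ (h3 (j + 1))) i := by
        refine dvd_trans ?_ (hdj i)
        push_cast
        exact dvd_pow_self _ (by omega)
      have h6 := h3b.trans hi
      omega

end SignMat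

namespace SignMat

lemma card_P {n : ℕ} (N : ℕ) (w : Fin n → ℤ) : (P N w).card = (K N w).card ^ n := by
  simp [P, Fintype.card_piFinset]

lemma card_Wfin (n M : ℕ) (hM : 1 < M) (η : ℝ) (i : Fin n) :
    (Wfin n M η i).card * M ≤ M ^ n := by
  classical
  have h1 : Wfin n M η i ⊆
      Fintype.piFinset fun k => if k = i then {(⟨1, hM⟩ : Fin M)} else Finset.univ := by
    intro w hw
    simp only [Wfin, Finset.mem_filter, Finset.mem_univ, true_and] at hw
    rw [Fintype.mem_piFinset]
    intro k
    split_ifs with h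
    · subst h
      rw [Finset.mem_singleton]
      exact Fin.ext hw.1
    · exact Finset.mem_univ _
  have h2 := Finset.card_le_card h1
  rw [Fintype.card_piFinset, ← Finset.mul_prod_erase _ _ (Finset.mem_univ i)] at h2
  have h3 : ∏ x ∈ Finset.univ.erase i,
      (if x = i then {(⟨1, hM⟩ : Fin M)} else Finset.univ : Finset (Fin M)).card = M ^ (n - 1) := by
    rw [Finset.prod_congr rfl (g := fun _ => M)]
    · simp [Finset.card_erase_of_mem]
    · intro x hx
      rw [if_neg (Finset.ne_of_mem_erase hx)]; simp
  rw [h3] at h2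
  simp only [if_true, Finset.card_singleton, one_mul] at h2
  have hn : 0 < n := i.pos
  calc _ ≤ M ^ (n - 1) * M := Nat.mul_le_mul_right _ h2
    _ = M ^ n := by rw [← pow_succ]; congr 1; omega

/-- the weight of the bad set at each level -/
lemma bad_level (n j b : ℕ) (hj : j < b) (η : ℝ) (hη : 0 < η) (r : ℕ) :
    (((Wbad n j η r).biUnion fun w => P (3 ^ (j + 1)) (lift w)).card : ℝ)
      ≤ ((2 : ℝ) ^ n) ^ n * (η⁻¹ ^ 6 * (15 / 16 + 5 / 16 * (3 ^ b * η)) ^ n) := by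
  classical
  by_cases hr : (3 : ℤ) ∣ r
  · have : Wbad n j η r = ∅ := by
      rw [Wbad, Finset.filter_eq_empty_iff]
      intro w _ h
      exact h.2.2.1 hr
    rw [this]
    simp
    positivity
  have hsub : (Wbad n j η r).card ≤ ((Finset.univ : Finset (Fin n → Fin (3 ^ (j + 1)))).filter
      fun w => η ≤ F (3 ^ (j + 1)) (fun i => (r : ℤ) * lift w i)).card := by
    apply Finset.card_le_card
    intro w hw
    simp only [Wbad, Finset.mem_filter, Finset.mem_univ, true_and] at hw ⊢
    exact hw.1
  have hsub' : ((Wbad n j η r).card : ℝ) ≤ _ :=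
    le_trans (Nat.cast_le.mpr hsub) (card_bad (3 ^ (j + 1)) η hη r)
  have main : ∀ (B q : ℝ), 0 ≤ B → (∀ w ∈ Wbad n j η r,
        ((K (3 ^ (j + 1)) (lift w)).card : ℝ) ≤ 2 ^ n * B) →
      ∑ x ∈ Finset.range (3 ^ (j + 1)), c (3 ^ (j + 1)) (r * x) ^ 6 = q → 0 ≤ q →
      q * B ≤ 15 / 16 + 5 / 16 * (3 ^ b * η) →
      (((Wbad n j η r).biUnion fun w => P (3 ^ (j + 1)) (lift w)).card : ℝ)
      ≤ ((2 : ℝ) ^ n) ^ n * (η⁻¹ ^ 6 * (15 / 16 + 5 / 16 * (3 ^ b * η)) ^ n) := by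
    intro B q hB hK hq hq0 hqB
    rw [hq] at hsub'
    calc (((Wbad n j η r).biUnion fun w => P (3 ^ (j + 1)) (lift w)).card : ℝ)
        ≤ ((∑ w ∈ Wbad n j η r, (P (3 ^ (j + 1)) (lift w)).card : ℕ) : ℝ) :=
          Nat.cast_le.mpr Finset.card_biUnion_le
      _ ≤ ∑ w ∈ Wbad n j η r, (2 ^ n * B) ^ n := by
          push_cast
          refine Finset.sum_le_sum fun w hw => ?_
          rw [card_P]; push_cast
          exact pow_le_pow_left₀ (by positivity) (hK w hw) n
      _ = (Wbad n j η r).card * (2 ^ n * B) ^ n := by simp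
      _ ≤ (η⁻¹ ^ 6 * q ^ n) * (2 ^ n * B) ^ n := by gcongr
      _ = ((2 : ℝ) ^ n) ^ n * (η⁻¹ ^ 6 * (q * B) ^ n) := by
          rw [mul_pow, mul_pow]; ring
      _ ≤ _ := by gcongr
  rcases Nat.eq_zero_or_pos j with h0 | h0
  · subst h0
    refine main (1 / 3 + 51 / 100) (33 / 32) (by norm_num) ?_ ?_ (by norm_num) ?_
    · intro w hw
      simp only [Wbad, Finset.mem_filter, Finset.mem_univ, true_and] at hw
      obtain ⟨i, hi⟩ := hw.2.2.2
      have := card_K_le 3 (by norm_num) (51 / 100) (by norm_num) (lift w) (G_three _ i hi)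
      exact_mod_cast this
    · exact sum_c_six_three r hr
    · have : 0 < (3 : ℝ) ^ b * η := by positivity
      linarith
  · refine main (1 / 3 ^ j + η) (5 / 16 * 3 ^ (j + 1)) (by positivity) ?_ ?_ (by positivity) ?_
    · intro w hw
      simp only [Wbad, Finset.mem_filter, Finset.mem_univ, true_and] at hw
      have h1 := card_K_le (3 ^ j) (by positivity) η hη.le (lift w) hw.2.1
      have h2 : ((K (3 ^ (j + 1)) (lift w)).card : ℝ) ≤ (K (3 ^ j) (lift w)).card :=
        Nat.cast_le.mpr (Finset.card_le_card (K_mono j _))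
      refine h2.trans (h1.trans ?_)
      push_cast; exact le_refl _
    · exact sum_c_six_big (j + 1) (by omega) r hr
    · have h1 : (3 : ℝ) ^ (j + 1) ≤ 3 ^ b := pow_le_pow_right₀ (by norm_num) (by omega)
      have h2 : (3 : ℝ) ^ (j + 1) * η ≤ 3 ^ b * η := by gcongr
      have h3 : (5 / 16 * 3 ^ (j + 1)) * (1 / 3 ^ j + η)
          = 15 / 16 + 5 / 16 * ((3 : ℝ) ^ (j + 1) * η) := by
        rw [pow_succ]; field_simp; ring
      rw [h3]; linarith

lemma Sing_card (n b : ℕ) (hb : 0 < b) (η : ℝ) (hη : 0 < η) :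
    ((Sing n).card : ℝ) ≤ ((2 : ℝ) ^ n) ^ n * (n / 3 ^ b * (1 + 3 ^ b * η) ^ n
      + b * (3 ^ b * (η⁻¹ ^ 6 * (15 / 16 + 5 / 16 * (3 ^ b * η)) ^ n))) := by
  classical
  have h0 := Finset.card_le_card (Sing_subset n b hb η hη)
  have h1 := h0.trans (Finset.card_union_le _ _)
  have h2 := (Nat.cast_le (α := ℝ)).mpr h1
  rw [Nat.cast_add] at h2
  refine h2.trans ?_
  rw [mul_add]
  have hM : (0 : ℝ) < 3 ^ b := by positivity
  refine add_le_add ?_ ?_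
  · calc _ ≤ ((∑ i : Fin n, ∑ w ∈ Wfin n (3 ^ b) η i, (P (3 ^ b) (lift w)).card : ℕ) : ℝ) := by
          refine Nat.cast_le.mpr (Finset.card_biUnion_le.trans ?_)
          exact Finset.sum_le_sum fun i _ => Finset.card_biUnion_le
      _ ≤ ∑ i : Fin n, ∑ w ∈ Wfin n (3 ^ b) η i, (2 ^ n * (1 / (3 : ℝ) ^ b + η)) ^ n := by
          push_cast
          refine Finset.sum_le_sum fun i _ => Finset.sum_le_sum fun w hw => ?_
          simp only [Wfin, Finset.mem_filter, Finset.mem_univ, true_and] at hw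
          rw [card_P]; push_cast
          have := card_K_le (3 ^ b) (by positivity) η hη.le (lift w) hw.2
          push_cast at this
          exact pow_le_pow_left₀ (by positivity) this n
      _ = ∑ i : Fin n, ((Wfin n (3 ^ b) η i).card : ℝ) * (2 ^ n * (1 / (3 : ℝ) ^ b + η)) ^ n := by
          simp
      _ ≤ ∑ i : Fin n, (((3 : ℝ) ^ b) ^ n / 3 ^ b) * (2 ^ n * (1 / (3 : ℝ) ^ b + η)) ^ n := by
          refine Finset.sum_le_sum fun i _ => ?_
          have h := card_Wfin n (3 ^ b) (Nat.one_lt_pow hb.ne' (by norm_num)) η i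
          have h' : ((Wfin n (3 ^ b) η i).card : ℝ) * 3 ^ b ≤ (3 ^ b) ^ n := by exact_mod_cast h
          have h'' : ((Wfin n (3 ^ b) η i).card : ℝ) ≤ ((3 : ℝ) ^ b) ^ n / 3 ^ b := by
            rwa [le_div_iff₀ hM]
          gcongr
      _ = ((2 : ℝ) ^ n) ^ n * (n / 3 ^ b * (3 ^ b * (1 / 3 ^ b + η)) ^ n) := by
          simp only [Finset.sum_const, Finset.card_univ, Fintype.card_fin, nsmul_eq_mul]
          rw [mul_pow, mul_pow]; ring
      _ = _ := by
          congr 3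
          field_simp
  · set Q := η⁻¹ ^ 6 * (15 / 16 + 5 / 16 * (3 ^ b * η)) ^ n with hQ
    have hQ0 : 0 ≤ Q := by positivity
    calc _ ≤ ((∑ j ∈ Finset.range b, ∑ r ∈ Finset.range (3 ^ (j + 1)),
            ((Wbad n j η r).biUnion fun w => P (3 ^ (j + 1)) (lift w)).card : ℕ) : ℝ) := by
          refine Nat.cast_le.mpr (Finset.card_biUnion_le.trans ?_)
          exact Finset.sum_le_sum fun i _ => Finset.card_biUnion_le
      _ ≤ ∑ j ∈ Finset.range b, ∑ r ∈ Finset.range (3 ^ (j + 1)), ((2 : ℝ) ^ n) ^ n * Q := by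
          push_cast
          refine Finset.sum_le_sum fun j hj => Finset.sum_le_sum fun r _ => ?_
          exact bad_level n j b (Finset.mem_range.mp hj) η hη r
      _ ≤ ∑ j ∈ Finset.range b, (3 : ℝ) ^ b * (((2 : ℝ) ^ n) ^ n * Q) := by
          refine Finset.sum_le_sum fun j hj => ?_
          simp only [Finset.sum_const, Finset.card_range, nsmul_eq_mul]
          have : (3 : ℝ) ^ (j + 1) ≤ 3 ^ b :=
            pow_le_pow_right₀ (by norm_num) (by have := Finset.mem_range.mp hj; omega)
          push_cast
          gcongr
      _ = _ := by simp; ring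

open Filter Topology in
lemma Sing_tendsto : Tendsto (fun n : ℕ => ((n : ℝ) + 1) * ((Sing n).card / ((2 : ℝ) ^ n) ^ n))
    atTop (𝓝 0) := by
  have hbound : ∀ᶠ n : ℕ in atTop, ((n : ℝ) + 1) * ((Sing n).card / ((2 : ℝ) ^ n) ^ n)
      ≤ 6 * (1 / (n : ℝ)) + 2 ^ 20 * ((n : ℝ) ^ 31 * (245 / 256 : ℝ) ^ n) := by
    filter_upwards [eventually_ge_atTop 16] with n hn
    have hnR : (16 : ℝ) ≤ n := by exact_mod_cast hn
    have hn0 : (0 : ℝ) < n := by linarith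
    set b := Nat.clog 3 (n ^ 3) with hb
    have hn3 : 1 < n ^ 3 := Nat.one_lt_pow (by norm_num) (by omega)
    have hb0 : 0 < b := Nat.clog_pos (by norm_num) (by omega)
    have hlo : n ^ 3 ≤ 3 ^ b := Nat.le_pow_clog (by norm_num) _
    have hhi : 3 ^ (b - 1) < n ^ 3 := Nat.pow_pred_clog_lt_self (by norm_num) hn3
    have hhi' : 3 ^ b ≤ 3 * n ^ 3 := by
      have : 3 ^ b = 3 * 3 ^ (b - 1) := by rw [← pow_succ']; congr 1; omega
      omega
    have hbn : b ≤ 3 ^ b := (Nat.lt_pow_self (by norm_num)).le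
    have hloR : (n : ℝ) ^ 3 ≤ 3 ^ b := by exact_mod_cast hlo
    have hhiR : (3 : ℝ) ^ b ≤ 3 * n ^ 3 := by exact_mod_cast hhi'
    have hbR : (b : ℝ) ≤ 3 ^ b := by exact_mod_cast hbn
    have hM : (0 : ℝ) < 3 ^ b := by positivity
    have hs := Sing_card n b hb0 (1 / (n * 3 ^ b)) (by positivity)
    have e1 : (3 : ℝ) ^ b * (1 / (n * 3 ^ b)) = 1 / n := by field_simp
    rw [e1] at hs
    have h2 : ((Sing n).card / ((2 : ℝ) ^ n) ^ n) ≤ n / 3 ^ b * (1 + 1 / n) ^ n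
      + b * (3 ^ b * ((1 / ((n : ℝ) * 3 ^ b))⁻¹ ^ 6 * (15 / 16 + 5 / 16 * (1 / n)) ^ n)) := by
      rw [div_le_iff₀ (by positivity), mul_comm _ (((2 : ℝ) ^ n) ^ n)]
      exact hs
    have h3 : (1 + 1 / (n : ℝ)) ^ n ≤ 3 := by
      calc (1 + 1 / (n : ℝ)) ^ n ≤ (Real.exp (1 / n)) ^ n := by
            refine pow_le_pow_left₀ (by positivity) ?_ n
            have := Real.add_one_le_exp (1 / (n : ℝ)); linarith
        _ = Real.exp 1 := by rw [← Real.exp_nat_mul]; congr 1; field_simp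
        _ ≤ 3 := by have := Real.exp_one_lt_d9; linarith
    have h4 : (15 / 16 + 5 / 16 * (1 / (n : ℝ))) ≤ 245 / 256 := by
      have : 1 / (n : ℝ) ≤ 1 / 16 := one_div_le_one_div_of_le (by norm_num) hnR
      linarith
    have h5 : (n : ℝ) / 3 ^ b * (1 + 1 / n) ^ n ≤ n / n ^ 3 * 3 := by gcongr
    have h6 : b * (3 ^ b * ((1 / ((n : ℝ) * 3 ^ b))⁻¹ ^ 6 * (15 / 16 + 5 / 16 * (1 / n)) ^ n))
        ≤ (3 * (n : ℝ) ^ 3) * ((3 * n ^ 3) * ((n * (3 * n ^ 3)) ^ 6 * (245 / 256) ^ n)) := by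
      rw [one_div, inv_inv]
      have := hbR.trans hhiR
      gcongr
    have h7 : ((Sing n).card / ((2 : ℝ) ^ n) ^ n) ≤ n / n ^ 3 * 3 +
      (3 * (n : ℝ) ^ 3) * ((3 * n ^ 3) * ((n * (3 * n ^ 3)) ^ 6 * (245 / 256) ^ n)) := by linarith
    have h8 : ((n : ℝ) + 1) ≤ 2 * n := by linarith
    calc ((n : ℝ) + 1) * ((Sing n).card / ((2 : ℝ) ^ n) ^ n)
        ≤ (2 * n) * (n / n ^ 3 * 3 +
      (3 * (n : ℝ) ^ 3) * ((3 * n ^ 3) * ((n * (3 * n ^ 3)) ^ 6 * (245 / 256) ^ n))) := by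
          gcongr
      _ = 6 * (1 / (n : ℝ)) + 13122 * ((n : ℝ) ^ 31 * (245 / 256 : ℝ) ^ n) := by
          field_simp; ring
      _ ≤ _ := by
          have : 0 ≤ ((n : ℝ) ^ 31 * (245 / 256 : ℝ) ^ n) := by positivity
          linarith
  have hlim : Tendsto (fun n : ℕ => 6 * (1 / (n : ℝ)) + 2 ^ 20 * ((n : ℝ) ^ 31 * (245 / 256 : ℝ) ^ n))
      atTop (𝓝 0) := by
    have a1 := (tendsto_one_div_atTop_nhds_zero_nat (𝕜 := ℝ)).const_mul 6
    have a2 := (tendsto_pow_const_mul_const_pow_of_abs_lt_one 31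
      (r := (245 / 256 : ℝ)) (by rw [abs_of_pos] <;> norm_num)).const_mul (2 ^ 20)
    simpa using a1.add a2
  refine tendsto_of_tendsto_of_tendsto_of_le_of_le' tendsto_const_nhds hlim ?_ hbound
  exact Eventually.of_forall fun n => by positivity

end SignMat

namespace SignMat

/-- Boolean to zero-one matrix. -/
def bm {n : ℕ} (A : Fin n → Fin n → Bool) : Matrix (Fin n) (Fin n) ℝ :=
  Matrix.of fun i j => if A i j then 1 else 0

/-- Real sign matrix applied to a vector. -/
noncomputable def R {n : ℕ} (A : Fin n → Fin n → Bool) (v : Fin n → ℝ) (i : Fin n) : ℝ :=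
  ∑ j, (sg (A i j) : ℝ) * v j

/-- The property defining the family. -/
def Q {n : ℕ} (A : Fin n → Fin n → Bool) : Prop :=
  IsUnit (bm A) ∧ ∃ x : Fin n → ℝ, (∀ j, 0 < x j) ∧ bm A *ᵥ x = 1

/-- Column sign flips. -/
def flip {n : ℕ} (A : Fin n → Fin n → Bool) (d : Fin n → Bool) : Fin n → Fin n → Bool :=
  fun i j => A i j == d j

lemma sg_beq (a b : Bool) : sg (a == b) = sg a * sg b := by
  cases a <;> cases b <;> rfl

lemma sg_sq (a : Bool) : sg a * sg a = 1 := by cases a <;> rfl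

lemma bm_mulVec {n : ℕ} (A : Fin n → Fin n → Bool) (v : Fin n → ℝ) (i : Fin n) :
    (bm A *ᵥ v) i = (R A v i + ∑ j, v j) / 2 := by
  simp only [Matrix.mulVec, dotProduct, bm, R, Matrix.of_apply]
  rw [← Finset.sum_add_distrib, Finset.sum_div]
  refine Finset.sum_congr rfl fun j _ => ?_
  cases A i j <;> simp [sg]

lemma R_flip {n : ℕ} (A : Fin n → Fin n → Bool) (d : Fin n → Bool) (v : Fin n → ℝ) :
    R (flip A d) v = R A (fun j => sg (d j) * v j) := by
  funext i
  simp only [R, flip, sg_beq]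
  refine Finset.sum_congr rfl fun j _ => ?_
  push_cast; ring

lemma isUnit_of_inj {n : ℕ} (M : Matrix (Fin n) (Fin n) ℝ) (h : ∀ v, M *ᵥ v = 0 → v = 0) :
    IsUnit M := by
  rw [Matrix.isUnit_iff_isUnit_det, isUnit_iff_ne_zero]
  intro h0
  obtain ⟨v, hv, hv'⟩ := Matrix.exists_mulVec_eq_zero_iff.mpr h0
  exact hv (h v hv')

lemma inj_of_isUnit {n : ℕ} (M : Matrix (Fin n) (Fin n) ℝ) (h : IsUnit M) (u v : Fin n → ℝ)
    (huv : M *ᵥ u = M *ᵥ v) : u = v :=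
  Matrix.mulVec_injective_iff_isUnit.mpr h huv

lemma Mcard_eq (n : ℕ) : Mcard n = Nat.card {A : Fin n → Fin n → Bool // Q A} := by
  symm
  unfold Mcard
  refine Nat.card_eq_of_bijective (fun A => ⟨bm A.1, ?_, A.2.1, ?_⟩) ⟨?_, ?_⟩
  · intro i j
    simp only [bm, Matrix.of_apply]
    split_ifs <;> simp
  · intro j
    obtain ⟨hu, x, hx, hx1⟩ := A.2
    have hdet := (Matrix.isUnit_iff_isUnit_det _).mp hu
    rw [← hx1, Matrix.mulVec_mulVec, Matrix.nonsing_inv_mul _ hdet, Matrix.one_mulVec]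
    exact hx j
  · intro A B h
    apply Subtype.ext
    funext i j
    have h1 : bm A.1 i j = bm B.1 i j := by
      have := congrArg Subtype.val h
      exact congrFun (congrFun this i) j
    simp only [bm, Matrix.of_apply] at h1
    cases hA : A.1 i j <;> cases hB : B.1 i j <;> simp_all
  · rintro ⟨M, h01, hu, hpos⟩
    classical
    have e : bm (fun i j => decide (M i j = 1)) = M := by
      ext i j
      simp only [bm, Matrix.of_apply]
      rcases h01 i j with h | h <;> simp [h]
    have hdet := (Matrix.isUnit_iff_isUnit_det _).mp hu
    refine ⟨⟨fun i j => decide (M i j = 1), ?_, M⁻¹ *ᵥ 1, hpos, ?_⟩, ?_⟩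
    · rw [e]; exact hu
    · rw [e, Matrix.mulVec_mulVec, Matrix.mul_nonsing_inv _ hdet, Matrix.one_mulVec]
    · apply Subtype.ext
      exact e

lemma flip_const {n : ℕ} (A : Fin n → Fin n → Bool) (d : Fin n → Bool) (hA : Q A)
    (hB : Q (flip A d)) : (∀ j, d j = true) ∨ (∀ j, d j = false) := by
  obtain ⟨hu, x, hx, hx1⟩ := hA
  obtain ⟨-, x', hx', hx1'⟩ := hB
  have h1 : ∀ i, R A (fun j => sg (d j) * x' j) i = 2 - ∑ j, x' j := by
    intro i
    have := congrFun hx1' i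
    rw [bm_mulVec, R_flip] at this
    simp only [Pi.one_apply] at this
    linarith
  obtain ⟨κ, hκ⟩ : ∃ κ : ℝ, bm A *ᵥ (fun j => sg (d j) * x' j) = bm A *ᵥ (κ • x) := by
    refine ⟨(2 - ∑ j, x' j + ∑ j, (sg (d j) : ℝ) * x' j) / 2, ?_⟩
    rw [Matrix.mulVec_smul, hx1]
    funext i
    rw [bm_mulVec, h1]
    simp
  have h2 := inj_of_isUnit _ hu _ _ hκ
  have h3 : ∀ j, (sg (d j) : ℝ) * x' j = κ * x j := fun j => congrFun h2 j
  rcases lt_trichotomy κ 0 with h | h | h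
  · right
    intro j
    by_contra hd
    have hd' : d j = true := by simpa using hd
    have := h3 j
    rw [hd'] at this
    simp only [sg, if_true, Int.cast_one, one_mul] at this
    have a := hx' j
    have b := mul_neg_of_neg_of_pos h (hx j)
    linarith
  · left
    intro j
    exfalso
    have := h3 j
    have a := hx' j
    rw [h, zero_mul] at this
    cases hd : d j <;> rw [hd] at this <;> simp [sg] at this <;> linarith
  · left
    intro j
    by_contra hd
    have hd' : d j = false := by simpa using hd
    have := h3 j
    rw [hd'] at this
    simp only [sg] at this
    have a := hx' j
    have b := mul_pos h (hx j)
    norm_num at this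
    linarith

open Classical in
lemma count_le_two {n : ℕ} (A : Fin n → Fin n → Bool) :
    (Finset.univ.filter fun d => Q (flip A d)).card ≤ 2 := by
  by_cases h : ∃ d0, Q (flip A d0)
  · obtain ⟨d0, h0⟩ := h
    have : (Finset.univ.filter fun d => Q (flip A d)) ⊆ {d0, fun j => !d0 j} := by
      intro d hd
      simp only [Finset.mem_filter, Finset.mem_univ, true_and] at hd
      have e : flip (flip A d0) (fun j => d0 j == d j) = flip A d := by
        funext i j
        simp only [flip]
        cases A i j <;> cases d0 j <;> cases d j <;> rfl
      have := flip_const (flip A d0) (fun j => d0 j == d j) h0 (by rw [e]; exact hd)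
      rw [Finset.mem_insert, Finset.mem_singleton]
      rcases this with h | h
      · left
        funext j
        have := h j
        simp at this; exact this.symm
      · right
        funext j
        have := h j
        cases h1 : d0 j <;> cases h2 : d j <;> simp_all
    exact (Finset.card_le_card this).trans Finset.card_le_two
  · push Not at h
    rw [Finset.filter_eq_empty_iff.mpr (fun d _ => h d)]
    simp

lemma flip_flip {n : ℕ} (A : Fin n → Fin n → Bool) (d : Fin n → Bool) : flip (flip A d) d = A := by
  funext i j
  simp only [flip]
  cases A i j <;> cases d j <;> rfl

open Classical in
lemma double_count (n : ℕ) :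
    ∑ A : Fin n → Fin n → Bool, (Finset.univ.filter fun d => Q (flip A d)).card
      = 2 ^ n * Mcard n := by
  have h1 : ∀ d : Fin n → Bool,
      (∑ A : Fin n → Fin n → Bool, if Q (flip A d) then 1 else 0) = Mcard n := by
    intro d
    rw [Mcard_eq, Nat.card_eq_fintype_card, Fintype.card_subtype, Finset.card_filter]
    exact Fintype.sum_equiv ⟨fun A => flip A d, fun A => flip A d, fun A => flip_flip A d,
      fun A => flip_flip A d⟩ _ _ fun A => rfl
  simp_rw [Finset.card_filter]
  rw [Finset.sum_comm, Finset.sum_congr rfl fun d _ => h1 d]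
  simp

lemma Q_of_sign {n : ℕ} (hn : 2 ≤ n) (B : Fin n → Fin n → Bool) (y : Fin n → ℝ)
    (hinj : ∀ v, (∀ i, R B v i = 0) → v = 0) (hy : ∀ i, R B y i = 1)
    (hs : (∀ j, 0 < y j) ∨ (∀ j, y j < 0)) : Q B := by
  set σ := ∑ j, y j with hσ
  have hσ' : (∀ j, 0 < y j) ∧ 0 < 1 + σ ∨ (∀ j, y j < 0) ∧ 1 + σ < 0 := by
    rcases hs with h | h
    · left
      refine ⟨h, ?_⟩
      have : 0 ≤ σ := Finset.sum_nonneg fun j _ => (h j).le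
      linarith
    · right
      refine ⟨h, ?_⟩
      by_contra hcon
      have hcon : 0 ≤ 1 + σ := not_lt.mp hcon
      have hall : ∀ i j, sg (B i j) = -1 := by
        intro i
        have h1 : ∑ j, (1 + (sg (B i j) : ℝ)) * y j = 1 + σ := by
          have e := hy i
          rw [R] at e
          simp_rw [add_mul, one_mul]
          rw [Finset.sum_add_distrib, e, hσ, add_comm]
        have hterm : ∀ j ∈ Finset.univ, (1 + (sg (B i j) : ℝ)) * y j ≤ 0 := by
          intro j _
          refine mul_nonpos_of_nonneg_of_nonpos ?_ (h j).le
          cases B i j <;> norm_num [sg]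
        have h2 : ∑ j, (1 + (sg (B i j) : ℝ)) * y j = 0 :=
          le_antisymm (Finset.sum_nonpos hterm) (by rw [h1]; exact hcon)
        rw [Finset.sum_eq_zero_iff_of_nonpos hterm] at h2
        intro j
        have h3 := h2 j (Finset.mem_univ _)
        have h4 : (1 + (sg (B i j) : ℝ)) = 0 := (mul_eq_zero.mp h3).resolve_right (h j).ne
        have h5 : (1 + sg (B i j) : ℤ) = 0 := by exact_mod_cast h4
        linarith
      let a : Fin n := ⟨0, by omega⟩
      let b : Fin n := ⟨1, by omega⟩
      have hab : a ≠ b := by simp [a, b]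
      have h0 := hinj (Pi.single a 1 - Pi.single b 1) (by
        intro i
        simp only [R, hall]
        rw [← Finset.mul_sum]
        simp)
      have := congrFun h0 a
      simp [hab] at this
  have hne : 1 + σ ≠ 0 := by
    rcases hσ' with h | h
    · exact h.2.ne'
    · exact h.2.ne
  refine ⟨?_, (2 / (1 + σ)) • y, ?_, ?_⟩
  · refine isUnit_of_inj _ fun v hv => ?_
    have h1 : ∀ i, R B v i = -∑ j, v j := by
      intro i
      have := congrFun hv i
      rw [bm_mulVec] at this
      simp only [Pi.zero_apply] at this
      linarith
    set s := ∑ j, v j with hsdef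
    have h2 : (fun j => v j + s * y j) = 0 := by
      apply hinj
      intro i
      have : R B (fun j => v j + s * y j) i = R B v i + s * R B y i := by
        simp only [R]
        rw [Finset.mul_sum, ← Finset.sum_add_distrib]
        exact Finset.sum_congr rfl fun j _ => by ring
      rw [this, h1, hy]; ring
    have h3 : ∀ j, v j + s * y j = 0 := fun j => congrFun h2 j
    have h4 : s * (1 + σ) = 0 := by
      have : ∑ j, (v j + s * y j) = 0 := Finset.sum_eq_zero fun j _ => h3 j
      rw [Finset.sum_add_distrib, ← Finset.mul_sum] at this
      rw [mul_add, mul_one]; exact this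
    have h5 : s = 0 := (mul_eq_zero.mp h4).resolve_right hne
    funext j
    have := h3 j
    rw [h5] at this
    simpa using this
  · intro j
    simp only [Pi.smul_apply, smul_eq_mul]
    rcases hσ' with h | h
    · exact mul_pos (div_pos two_pos h.2) (h.1 j)
    · exact mul_pos_of_neg_of_neg (div_neg_of_pos_of_neg two_pos h.2) (h.1 j)
  · rw [Matrix.mulVec_smul]
    funext i
    simp only [Pi.smul_apply, smul_eq_mul, Pi.one_apply]
    rw [bm_mulVec, hy, ← hσ]
    field_simp

open Classical in
lemma count_ge_two {n : ℕ} (hn : 2 ≤ n) (A : Fin n → Fin n → Bool) (h0 : (smat A).det ≠ 0)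
    (h1 : ∀ i, ((smat A).updateCol i 1).det ≠ 0) :
    2 ≤ (Finset.univ.filter fun d => Q (flip A d)).card := by
  have hinj : ∀ v, (∀ i, R A v i = 0) → v = 0 := by
    intro v hv
    by_contra hv0
    have h2 : ((smat A).map (Int.castRingHom ℝ)).det = 0 := by
      rw [← Matrix.exists_mulVec_eq_zero_iff]
      refine ⟨v, hv0, ?_⟩
      funext i
      simpa [Matrix.mulVec, dotProduct, smat, R] using hv i
    have h3 := RingHom.map_det (Int.castRingHom ℝ) (smat A)
    rw [RingHom.mapMatrix_apply, h2] at h3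
    simp at h3
    exact h0 h3
  set z := Matrix.cramer (smat A) 1 with hz
  have hz0 : ∀ i, z i ≠ 0 := fun i => by
    rw [hz, Matrix.cramer_apply]; exact h1 i
  set D := (smat A).det with hD
  have hDR : (D : ℝ) ≠ 0 := by exact_mod_cast h0
  set y : Fin n → ℝ := fun j => z j / D with hy
  have hy0 : ∀ j, y j ≠ 0 := fun j => div_ne_zero (by exact_mod_cast hz0 j) hDR
  have hRy : ∀ i, R A y i = 1 := by
    intro i
    have h2 := congrFun (Matrix.mulVec_cramer (smat A) 1) i
    simp only [Matrix.mulVec, dotProduct, smat, Matrix.of_apply, Pi.smul_apply, Pi.one_apply,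
      smul_eq_mul, mul_one] at h2
    have h3 : ∑ j, sg (A i j) * z j = D := h2
    have h4 : ∑ j, (sg (A i j) : ℝ) * z j = D := by exact_mod_cast h3
    simp only [R, hy]
    rw [eq_comm, ← div_self hDR]
    nth_rewrite 1 [← h4]
    rw [Finset.sum_div]
    exact Finset.sum_congr rfl fun j _ => by ring
  have sgsq : ∀ b : Bool, (sg b : ℝ) * sg b = 1 := fun b => by exact_mod_cast sg_sq b
  have key : ∀ d : Fin n → Bool, ((∀ j, 0 < (sg (d j) : ℝ) * y j) ∨ (∀ j, (sg (d j) : ℝ) * y j < 0)) →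
      Q (flip A d) := by
    intro d hd
    refine Q_of_sign hn _ (fun j => sg (d j) * y j) ?_ ?_ hd
    · intro v hv
      rw [R_flip] at hv
      have := hinj _ hv
      funext j
      have h5 : (sg (d j) : ℝ) * v j = 0 := congrFun this j
      have h6 : v j = sg (d j) * (sg (d j) * v j) := by
        rw [← mul_assoc, sgsq, one_mul]
      rw [h6, h5, mul_zero]; rfl
    · intro i
      rw [R_flip, ← hRy i]
      congr 1
      funext j
      rw [← mul_assoc, sgsq, one_mul]
  set d1 : Fin n → Bool := fun j => decide (0 < y j) with hd1
  have hne : d1 ≠ fun j => !d1 j := by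
    intro h
    have := congrFun h ⟨0, by omega⟩
    simp at this
  have hp : ∀ j, 0 < (sg (d1 j) : ℝ) * y j := by
    intro j
    rcases lt_or_gt_of_ne (hy0 j) with h | h
    · simp [hd1, sg, not_lt.mpr h.le, h]
    · simp [hd1, sg, h]
  have hsub : ({d1, fun j => !d1 j} : Finset (Fin n → Bool)) ⊆
      Finset.univ.filter fun d => Q (flip A d) := by
    intro d hd
    rw [Finset.mem_insert, Finset.mem_singleton] at hd
    simp only [Finset.mem_filter, Finset.mem_univ, true_and]
    rcases hd with rfl | rfl
    · exact key _ (Or.inl hp)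
    · refine key _ (Or.inr fun j => ?_)
      have := hp j
      have e : sg (!d1 j) = - sg (d1 j) := by cases d1 j <;> rfl
      rw [e]; push_cast; linarith
  have := Finset.card_le_card hsub
  rwa [Finset.card_pair hne] at this

open Classical in
lemma card_col {n : ℕ} (i : Fin n) :
    (Finset.univ.filter fun A : Fin n → Fin n → Bool => ((smat A).updateCol i 1).det = 0).card
      ≤ (Sing n).card := by
  refine Finset.card_le_card_of_injOn
    (fun A k j => if j = i then A k i else (A k j == A k i)) ?_ ?_
  · intro A hA
    simp only [Finset.coe_filter, Finset.mem_univ, true_and, Set.mem_ofPred_eq] at hA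
    simp only [Sing, Finset.coe_filter, Finset.mem_univ, true_and, Set.mem_ofPred_eq]
    have e : smat (fun k j => if j = i then A k i else (A k j == A k i))
        = Matrix.diagonal (fun k => sg (A k i)) * (smat A).updateCol i 1 := by
      ext k j
      rw [Matrix.diagonal_mul]
      simp only [smat, Matrix.of_apply, Matrix.updateCol_apply]
      split_ifs with h
      · simp
      · rw [sg_beq, mul_comm]
    rw [e, Matrix.det_mul, hA, mul_zero]
  · intro A _ B _ h
    funext k j
    have h1 := congrFun (congrFun h k) i
    have h2 := congrFun (congrFun h k) j
    simp only [if_true] at h1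
    by_cases hj : j = i
    · rw [hj]; exact h1
    · simp only [if_neg hj, h1] at h2
      revert h2
      cases A k j <;> cases B k j <;> cases B k i <;> simp

lemma upper (n : ℕ) : 2 ^ n * Mcard n ≤ 2 * (2 ^ n) ^ n := by
  classical
  rw [← double_count]
  refine (Finset.sum_le_sum fun A _ => count_le_two A).trans ?_
  simp [mul_comm]

lemma lower (n : ℕ) (hn : 2 ≤ n) :
    2 * (2 ^ n) ^ n ≤ 2 ^ n * Mcard n + 2 * ((n + 1) * (Sing n).card) := by
  classical
  set Bad : Finset (Fin n → Fin n → Bool) := Sing n ∪ Finset.univ.biUnion fun i =>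
    Finset.univ.filter fun A => ((smat A).updateCol i 1).det = 0 with hBad
  have hBc : Bad.card ≤ (n + 1) * (Sing n).card := by
    refine (Finset.card_union_le _ _).trans ?_
    have : (Finset.univ.biUnion fun i : Fin n => Finset.univ.filter
        fun A : Fin n → Fin n → Bool => ((smat A).updateCol i 1).det = 0).card
        ≤ n * (Sing n).card := by
      refine Finset.card_biUnion_le.trans ?_
      refine (Finset.sum_le_sum fun i _ => card_col i).trans ?_
      simp
    rw [add_mul, one_mul]; omega
  have hterm : ∀ A : Fin n → Fin n → Bool,
      2 ≤ (Finset.univ.filter fun d => Q (flip A d)).card + (if A ∈ Bad then 2 else 0) := by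
    intro A
    split_ifs with h
    · omega
    · rw [add_zero]
      simp only [hBad, Finset.mem_union, Finset.mem_biUnion, Finset.mem_filter, Finset.mem_univ,
        true_and, not_or, not_exists, Sing] at h
      exact count_ge_two hn A h.1 h.2
  have hsum := Finset.sum_le_sum fun A (_ : A ∈ Finset.univ) => hterm A
  rw [Finset.sum_add_distrib, double_count, ← Finset.sum_filter] at hsum
  simp only [Finset.sum_const, Finset.filter_mem_eq_inter, Finset.univ_inter, Finset.card_univ,
    smul_eq_mul, Fintype.card_fun, Fintype.card_fin, Fintype.card_bool] at hsum
  omega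

end SignMat

/-- Lemma (Lemma `lem:regular3`): `M_n ∼ 2^{n²−n+1}`. -/
theorem Mcard_asymptotic :
    Filter.Tendsto (fun n : ℕ => (Mcard n : ℝ) / 2 ^ (n ^ 2 - n + 1))
      Filter.atTop (nhds 1) := by
  have hlim := (SignMat.Sing_tendsto).const_sub 1
  rw [sub_zero] at hlim
  have hpow : ∀ n : ℕ, (2 : ℝ) ^ n * 2 ^ (n ^ 2 - n + 1) = 2 * (2 ^ n) ^ n := by
    intro n
    have h : n ≤ n ^ 2 := Nat.le_self_pow (by norm_num) n
    rw [← pow_add, ← pow_mul, ← pow_succ']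
    congr 1
    rw [← sq]; omega
  refine tendsto_of_tendsto_of_tendsto_of_le_of_le' hlim tendsto_const_nhds ?_ ?_
  · filter_upwards [Filter.eventually_ge_atTop 2] with n hn
    have h1 := SignMat.lower n hn
    have h2 : 2 * ((2 : ℝ) ^ n) ^ n ≤ 2 ^ n * Mcard n
        + 2 * (((n : ℝ) + 1) * (SignMat.Sing n).card) := by exact_mod_cast h1
    have h3 := hpow n
    rw [le_div_iff₀ (by positivity)]
    have hp : (0 : ℝ) < 2 ^ n := by positivity
    refine le_of_mul_le_mul_left ?_ hp
    calc (2 : ℝ) ^ n * ((1 - ((n : ℝ) + 1) * ((SignMat.Sing n).card / ((2 : ℝ) ^ n) ^ n))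
          * 2 ^ (n ^ 2 - n + 1))
        = (1 - ((n : ℝ) + 1) * ((SignMat.Sing n).card / ((2 : ℝ) ^ n) ^ n))
          * (2 ^ n * 2 ^ (n ^ 2 - n + 1)) := by ring
      _ = 2 * ((2 : ℝ) ^ n) ^ n - 2 * (((n : ℝ) + 1) * (SignMat.Sing n).card) := by
          rw [h3]; field_simp
      _ ≤ _ := by linarith
  · refine Filter.Eventually.of_forall fun n => ?_
    have h1 := SignMat.upper n
    have h2 : (2 : ℝ) ^ n * Mcard n ≤ 2 * (2 ^ n) ^ n := by exact_mod_cast h1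
    rw [div_le_one (by positivity)]
    have hp : (0 : ℝ) < 2 ^ n := by positivity
    refine le_of_mul_le_mul_left ?_ hp
    rw [hpow]; exact h2
end

section
/- The number B_n^n of minimal balanced collections on a set of n elements consisting of exactly n subsets satisfies B_n^n ∼ 2^{n²−n+1}/n!, i.e., lim_{n→∞} B_n^n · n! / 2^{n²−n+1} = 1. -/
open Finset

/-- `lam` is a system of balancing weights for the collection `B`:
all weights are positive and `∑_{S∈B, S∋i} λ_S = 1` for every player `i`. -/
def IsBalancingWeights {n : ℕ} (B : Finset (Finset (Fin n)))
    (lam : Finset (Fin n) → ℝ) : Prop :=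
  (∀ S ∈ B, 0 < lam S) ∧ ∀ i : Fin n, ∑ S ∈ B.filter (fun S => i ∈ S), lam S = 1

/-- `B` is a balanced collection: a family of nonempty subsets of `N` admitting a
system of balancing weights. -/
def IsBalancedCollection {n : ℕ} (B : Finset (Finset (Fin n))) : Prop :=
  (∀ S ∈ B, S ≠ ∅) ∧ ∃ lam, IsBalancingWeights B lam

/-- `B` is a minimal balanced collection: balanced and no proper subfamily is balanced. -/
def IsMinimalBalancedCollection {n : ℕ} (B : Finset (Finset (Fin n))) : Prop :=
  IsBalancedCollection B ∧ ∀ B' ⊂ B, ¬ IsBalancedCollection B'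

/-- `B_n^n`: the number of minimal balanced collections on `N = {1,…,n}` (other
than `{N}`) consisting of exactly `n` subsets. -/
noncomputable def Bnn (n : ℕ) : ℕ :=
  Nat.card {B : Finset (Finset (Fin n)) //
    IsMinimalBalancedCollection B ∧ B ≠ {Finset.univ} ∧ B.card = n}


/-- sign of a boolean -/
noncomputable def sg (b : Bool) : ℝ := if b then 1 else -1

theorem central_sq (m : ℕ) : (Nat.centralBinom m)^2 * (2*m+1) ≤ 16^m := by
  induction m with
  | zero => simp
  | succ m ih =>
    have h := Nat.succ_mul_centralBinom_succ m
    have h2 : (m+1)^2 * ((Nat.centralBinom (m+1))^2 * (2*(m+1)+1)) ≤ (m+1)^2 * 16^(m+1) := by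
      calc (m+1)^2 * ((Nat.centralBinom (m+1))^2 * (2*(m+1)+1))
          = ((m+1) * Nat.centralBinom (m+1))^2 * (2*m+3) := by ring
        _ = (2 * (2*m+1) * Nat.centralBinom m)^2 * (2*m+3) := by rw [h]
        _ = (Nat.centralBinom m^2 * (2*m+1)) * (4 * ((2*m+1) * (2*m+3))) := by ring
        _ ≤ 16^m * (4 * (4 * (m+1)^2)) := by
            have h5 : (2*m+1) * (2*m+3) ≤ 4 * (m+1)^2 := by nlinarith
            exact Nat.mul_le_mul ih (Nat.mul_le_mul_left 4 h5)
        _ = (m+1)^2 * 16^(m+1) := by ring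
    exact Nat.le_of_mul_le_mul_left h2 (by positivity)

theorem choose_half_sq (u : ℕ) : (u.choose (u/2))^2 * (u+1) ≤ 4^u := by
  rcases Nat.even_or_odd' u with ⟨m, rfl | rfl⟩
  · have := central_sq m
    rw [Nat.centralBinom_eq_two_mul_choose] at this
    rw [show 2*m/2 = m by omega]
    calc _ ≤ 16^m := this
      _ = _ := by rw [pow_mul]; norm_num
  · have := central_sq (m+1)
    have h2 : Nat.centralBinom (m+1) = 2 * (2*m+1).choose m := by
      rw [Nat.centralBinom_eq_two_mul_choose, show 2*(m+1) = (2*m+1)+1 by ring, Nat.choose_succ_succ]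
      rw [Nat.choose_symm_half]; ring
    rw [show (2*m+1)/2 = m by omega]
    rw [h2] at this
    have h3 : (4:ℕ)^(2*m+1) * 4 = 16^(m+1) := by
      rw [← pow_succ, show 2*m+1+1 = 2*(m+1) by ring, pow_mul]; norm_num
    nlinarith

theorem choose_half_le (k : ℕ) (hk : 1 ≤ k) : 2 * k.choose (k/2) ≤ 2^k := by
  have h := choose_half_sq k
  by_cases h3 : 3 ≤ k
  · have : (2 * k.choose (k/2))^2 ≤ (2^k)^2 := by
      rw [← pow_mul, mul_comm k 2, pow_mul]; norm_num
      nlinarith [sq_nonneg (k.choose (k/2))]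
    exact (Nat.pow_le_pow_iff_left (by norm_num)).1 this
  · interval_cases k <;> simp

section LO
variable {ι : Type*} [Fintype ι] [DecidableEq ι]

theorem fiber_sperner (G : Finset (Finset ι)) (U : Finset ι)
    (h : ∀ B ∈ G, ∀ B' ∈ G, B ∩ Uᶜ = B' ∩ Uᶜ → B ⊂ B' → False) :
    #G ≤ 2 ^ #Uᶜ * (#U).choose (#U / 2) := by
  have h1 : #G ≤ (#U).choose (#U / 2) * #(Uᶜ.powerset) := by
    apply Finset.card_le_mul_card_image_of_maps_to (f := fun B => B ∩ Uᶜ)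
    · intro B _; simp [Finset.inter_subset_right]
    · intro C _
      let g : Finset ι → Finset {i // i ∈ U} := fun B => B.subtype (fun i => i ∈ U)
      have hg : ∀ B ∈ G.filter (fun B => B ∩ Uᶜ = C), ∀ B' ∈ G.filter (fun B => B ∩ Uᶜ = C),
          g B ⊆ g B' → B ⊆ B' := by
        intro B hB B' hB' hs i hi
        by_cases hU : i ∈ U
        · have : (⟨i, hU⟩ : {i // i ∈ U}) ∈ g B := by simp [g, hi]
          have := hs this
          simpa [g] using this
        · have : i ∈ B ∩ Uᶜ := by simp [hi, hU]
          rw [(mem_filter.1 hB).2, ← (mem_filter.1 hB').2] at this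
          exact (mem_inter.1 this).1
      have hc : #(G.filter (fun B => B ∩ Uᶜ = C)) = #((G.filter (fun B => B ∩ Uᶜ = C)).image g) := by
        symm; apply Finset.card_image_of_injOn
        intro B hB B' hB' he
        exact Finset.Subset.antisymm (hg B hB B' hB' he.le)
          (hg B' hB' B hB he.ge)
      have hcard : Fintype.card {i // i ∈ U} = #U := Fintype.card_coe U
      rw [hc, ← hcard]
      apply IsAntichain.sperner
      intro x hx y hy hne hle
      simp only [coe_image, Set.mem_image, mem_coe] at hx hy
      obtain ⟨B, hB, rfl⟩ := hx
      obtain ⟨B', hB', rfl⟩ := hy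
      have hs := hg B hB B' hB' hle
      refine h B (mem_filter.1 hB).1 B' (mem_filter.1 hB').1 ?_ ?_
      · rw [(mem_filter.1 hB).2, (mem_filter.1 hB').2]
      · exact lt_of_le_of_ne hs (fun e => hne (by rw [e]))
  rw [card_powerset] at h1
  linarith

theorem sum_lt_of_ssub (c : ι → ℝ) (hc : ∀ i, 0 ≤ c i) (U : Finset ι) (δ : ℝ)
    (hU : ∀ i ∈ U, δ < c i) {B B' : Finset ι} (h1 : B ∩ Uᶜ = B' ∩ Uᶜ) (h2 : B ⊂ B') :
    ∑ i ∈ B, c i + δ < ∑ i ∈ B', c i := by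
  obtain ⟨hs, i, hi, hi'⟩ := Finset.ssubset_iff_exists_cons_subset.1 h2 |> fun _ => 
    (⟨h2.1, Finset.exists_of_ssubset h2⟩ : B ⊆ B' ∧ ∃ i ∈ B', i ∉ B)
  have hiU : i ∈ U := by
    by_contra hU
    have : i ∈ B' ∩ Uᶜ := by simp [hi, hU]
    rw [← h1] at this
    exact hi' (mem_inter.1 this).1
  have : ∑ j ∈ insert i B, c j ≤ ∑ j ∈ B', c j :=
    Finset.sum_le_sum_of_subset_of_nonneg (insert_subset hi hs) (fun j _ _ => hc j)
  rw [sum_insert hi'] at this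
  linarith [hU i hiU]

theorem EO_finset (c : ι → ℝ) (hc : ∀ i, 0 ≤ c i) (t : ℝ) (U : Finset ι) (hU : ∀ i ∈ U, 0 < c i) :
    #{A : Finset ι | ∑ i ∈ A, c i = t} ≤ 2 ^ #Uᶜ * (#U).choose (#U / 2) := by
  apply fiber_sperner
  intro B hB B' hB' h1 h2
  have := sum_lt_of_ssub c hc U 0 hU h1 h2
  simp at hB hB'
  linarith

theorem SS_finset (c : ι → ℝ) (hc : ∀ i, 0 ≤ c i) (t : ℝ) (L U : Finset ι)
    (hL : ∀ i ∈ L, 0 < c i) (hinj : Set.InjOn c L) (hLU : ∀ i ∈ L, ∀ j ∈ U, c i < c j) :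
    #{A : Finset ι | ∑ i ∈ A, c i = t} * #L ≤ 2 * (2 ^ #Uᶜ * (#U).choose (#U / 2)) := by
  by_cases hne : L.Nonempty
  swap
  · simp [not_nonempty_iff_eq_empty.1 hne]
  obtain ⟨m, hm, hmax⟩ := exists_max_image L c hne
  set F : Finset (Finset ι) := {A : Finset ι | ∑ i ∈ A, c i = t} with hF
  let Gp : Finset (Finset ι) := {B | ∃ i ∈ L, ∑ j ∈ B, c j = t + c i}
  let Gm : Finset (Finset ι) := {B | ∃ i ∈ L, ∑ j ∈ B, c j = t - c i}
  have hp : #Gp ≤ 2 ^ #Uᶜ * (#U).choose (#U / 2) := by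
    apply fiber_sperner
    intro B hB B' hB' h1 h2
    have := sum_lt_of_ssub c hc U (c m) (fun j hj => hLU m hm j hj) h1 h2
    simp only [Gp, mem_filter, mem_univ, true_and] at hB hB'
    obtain ⟨i, hi, e⟩ := hB
    obtain ⟨i', hi', e'⟩ := hB'
    linarith [hmax i' hi', hL i hi]
  have hm' : #Gm ≤ 2 ^ #Uᶜ * (#U).choose (#U / 2) := by
    apply fiber_sperner
    intro B hB B' hB' h1 h2
    have := sum_lt_of_ssub c hc U (c m) (fun j hj => hLU m hm j hj) h1 h2
    simp only [Gm, mem_filter, mem_univ, true_and] at hB hB'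
    obtain ⟨i, hi, e⟩ := hB
    obtain ⟨i', hi', e'⟩ := hB'
    linarith [hmax i hi, hL i' hi']
  have key : #(F ×ˢ L) ≤ #(Gp ∪ Gm) := by
    have hs : ∀ A ∈ F, ∀ i ∈ L, (i ∈ A → ∑ j ∈ A.erase i, c j = t - c i) ∧
        (i ∉ A → ∑ j ∈ insert i A, c j = t + c i) := by
      intro A hA i hi
      simp only [hF, mem_filter, mem_univ, true_and] at hA
      constructor
      · intro h; have := Finset.add_sum_erase A c h; linarith
      · intro h; rw [sum_insert h]; linarith
    apply Finset.card_le_card_of_injOn (fun p => if p.2 ∈ p.1 then p.1.erase p.2 else insert p.2 p.1)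
    · rintro ⟨A, i⟩ hp
      simp only [coe_product, Set.mem_prod, mem_coe] at hp
      have h1 := hs A hp.1 i hp.2
      by_cases h : i ∈ A
      · simp only [h, if_true, mem_coe, mem_union]
        right; simp only [Gm, mem_filter, mem_univ, true_and]
        exact ⟨i, hp.2, h1.1 h⟩
      · simp only [h, if_false, mem_coe, mem_union]
        left; simp only [Gp, mem_filter, mem_univ, true_and]
        exact ⟨i, hp.2, h1.2 h⟩
    · rintro ⟨A, i⟩ hp ⟨A', i'⟩ hp' he
      simp only [coe_product, Set.mem_prod, mem_coe] at hp hp' he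
      have h1 := hs A hp.1 i hp.2
      have h1' := hs A' hp'.1 i' hp'.2
      have hi := hL i hp.2
      have hi' := hL i' hp'.2
      by_cases h : i ∈ A <;> by_cases h' : i' ∈ A' <;> simp only [h, h', if_true, if_false] at he
      · have e1 := h1.1 h; have e2 := h1'.1 h'
        rw [he] at e1
        have : i = i' := hinj hp.2 hp'.2 (by linarith)
        subst this
        have : A = A' := by rw [← insert_erase h, he, insert_erase h']
        rw [this]
      · have e1 := h1.1 h; have e2 := h1'.2 h'
        rw [he] at e1; linarith
      · have e1 := h1.2 h; have e2 := h1'.1 h'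
        rw [he] at e1; linarith
      · have e1 := h1.2 h; have e2 := h1'.2 h'
        rw [he] at e1
        have : i = i' := hinj hp.2 hp'.2 (by linarith)
        subst this
        have : A = A' := by rw [← erase_insert h, he, erase_insert h']
        rw [this]
  rw [card_product] at key
  have := card_union_le Gp Gm
  linarith

/-- number of sign vectors orthogonal to `a` -/
noncomputable def Zc (a : ι → ℝ) : ℕ := #{x : ι → Bool | ∑ i, sg (x i) * a i = 0}

theorem Zc_le (a : ι → ℝ) :
    Zc a ≤ #{A : Finset ι | ∑ i ∈ A, |a i| = (∑ i, |a i|) / 2} := by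
  unfold Zc
  apply Finset.card_le_card_of_injOn
    (fun x => (univ.filter (fun i => x i = decide (0 ≤ a i)) : Finset ι))
  · intro x hx
    simp only [coe_filter, mem_univ, true_and, Set.mem_ofPred_eq] at hx ⊢
    have h : ∀ i, sg (x i) * a i = 2 * (if x i = decide (0 ≤ a i) then |a i| else 0) - |a i| := by
      intro i
      unfold sg
      by_cases h0 : 0 ≤ a i
      · rw [abs_of_nonneg h0]; cases x i <;> simp [h0]; ring
      · rw [abs_of_neg (not_le.1 h0)]; cases x i <;> simp [h0]; ring
    rw [sum_filter]
    simp_rw [h] at hx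
    rw [sum_sub_distrib, ← mul_sum] at hx
    linarith
  · intro x _ y _ he
    funext i
    have : i ∈ (univ.filter (fun i => x i = decide (0 ≤ a i)) : Finset ι) ↔
      i ∈ (univ.filter (fun i => y i = decide (0 ≤ a i)) : Finset ι) := by
        simp only at he; rw [he]
    simp at this
    cases hx : x i <;> cases hy : y i <;> simp [hx, hy] at this ⊢ <;> by_cases h0 : 0 ≤ a i <;> simp_all <;> linarith

/-- support -/
noncomputable def supp (a : ι → ℝ) : Finset ι := {i | a i ≠ 0}

/-- number of distinct nonzero absolute values -/
noncomputable def dv (a : ι → ℝ) : ℕ := #((supp a).image (fun i => |a i|))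

theorem dv_le_supp (a : ι → ℝ) : dv a ≤ #(supp a) := card_image_le

theorem supp_pos (a : ι → ℝ) (h : a ≠ 0) : 1 ≤ #(supp a) := by
  obtain ⟨i, hi⟩ := Function.ne_iff.1 h
  exact card_pos.2 ⟨i, by simpa [supp] using hi⟩

theorem dv_pos (a : ι → ℝ) (h : a ≠ 0) : 1 ≤ dv a := by
  have := supp_pos a h
  unfold dv
  exact card_pos.2 ((card_pos.1 this).image _)

theorem Zc_supp (a : ι → ℝ) :
    Zc a ≤ 2 ^ (Fintype.card ι - #(supp a)) * (#(supp a)).choose (#(supp a) / 2) := by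
  rw [← card_compl]
  exact (Zc_le a).trans (EO_finset _ (fun i => abs_nonneg _) _ _
    (fun i hi => by simpa [supp] using hi))

theorem Zc_half (a : ι → ℝ) (h : a ≠ 0) : 2 * Zc a ≤ 2 ^ Fintype.card ι := by
  have h1 := Zc_supp a
  have h2 := choose_half_le _ (supp_pos a h)
  have h3 : #(supp a) ≤ Fintype.card ι := card_le_univ _
  calc 2 * Zc a ≤ 2 ^ (Fintype.card ι - #(supp a)) * (2 * (#(supp a)).choose (#(supp a) / 2)) := by
        linarith
    _ ≤ 2 ^ (Fintype.card ι - #(supp a)) * 2 ^ #(supp a) := by gcongr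
    _ = _ := by rw [← pow_add, Nat.sub_add_cancel h3]

theorem Zc_sqrt (a : ι → ℝ) : (Zc a)^2 * (#(supp a) + 1) ≤ 4 ^ Fintype.card ι := by
  have h1 := Zc_supp a
  have h2 := choose_half_sq (#(supp a))
  have h3 : #(supp a) ≤ Fintype.card ι := card_le_univ _
  calc (Zc a)^2 * (#(supp a) + 1)
      ≤ (2 ^ (Fintype.card ι - #(supp a)) * (#(supp a)).choose (#(supp a) / 2))^2 * (#(supp a) + 1) := by
        gcongr
    _ = 4 ^ (Fintype.card ι - #(supp a)) * ((#(supp a)).choose (#(supp a) / 2)^2 * (#(supp a) + 1)) := by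
        rw [mul_pow, ← pow_mul, mul_comm _ 2, pow_mul]; norm_num; ring
    _ ≤ 4 ^ (Fintype.card ι - #(supp a)) * 4 ^ #(supp a) := by gcongr
    _ = _ := by rw [← pow_add, Nat.sub_add_cancel h3]

theorem exists_lower (T : Finset ι) (c : ι → ℝ) (hinj : Set.InjOn c T) (l : ℕ) (hl : l ≤ #T) :
    ∃ L ⊆ T, #L = l ∧ ∀ i ∈ L, ∀ j ∈ T \ L, c i < c j := by
  induction l with
  | zero => exact ⟨∅, by simp, by simp, by simp⟩
  | succ l ih =>
    obtain ⟨L, hLT, hc, h⟩ := ih (by omega)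
    have hne : (T \ L).Nonempty := by
      rw [← card_pos, card_sdiff_of_subset hLT]; omega
    obtain ⟨m, hm, hmin⟩ := exists_min_image (T \ L) c hne
    have hm' := mem_sdiff.1 hm
    refine ⟨insert m L, insert_subset hm'.1 hLT, by rw [card_insert_of_notMem hm'.2, hc], ?_⟩
    intro i hi j hj
    have hj' : j ∈ T \ L ∧ j ≠ m := by
      simp only [mem_sdiff, mem_insert, not_or] at hj ⊢
      tauto
    rcases mem_insert.1 hi with rfl | hi
    · refine lt_of_le_of_ne (hmin j hj'.1) (fun e => hj'.2 ?_)
      exact (hinj hm'.1 (mem_sdiff.1 hj'.1).1 e).symm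
    · exact h i hi j hj'.1

theorem Zc_SS (a : ι → ℝ) : (Zc a)^2 * (dv a)^3 ≤ 72 * 4 ^ Fintype.card ι := by
  set n := Fintype.card ι with hn
  by_cases hs : dv a ≤ 1
  · have h1 : Zc a ≤ 2^n := by
      unfold Zc
      refine (card_le_univ _).trans ?_
      simp [hn]
    have h4 : (4:ℕ)^n = (2^n)^2 := by rw [← pow_mul, mul_comm, pow_mul]; norm_num
    calc (Zc a)^2 * (dv a)^3 ≤ (2^n)^2 * 1^3 := by gcongr
      _ ≤ _ := by rw [h4]; nlinarith [sq_nonneg (2^n)]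
  · push Not at hs
    obtain ⟨T, hTs, hTc, hTi⟩ : ∃ T ⊆ supp a, #T = dv a ∧ Set.InjOn (fun i => |a i|) T := by
      obtain ⟨T, h1, h2, h3⟩ := Finset.exists_subset_injOn_image_eq_of_surjOn (supp a)
        ((supp a).image (fun i => |a i|)) (f := fun i => |a i|) (by
          rw [coe_image]; exact Set.surjOn_image _ _)
      exact ⟨T, h1, by rw [dv, ← h3, card_image_of_injOn h2], h2⟩
    obtain ⟨L, hLT, hLc, hL⟩ := exists_lower T (fun i => |a i|) hTi (dv a / 2) (by omega)
    have h1 := SS_finset (fun i => |a i|) (fun i => abs_nonneg _) ((∑ i, |a i|) / 2) L (T \ L)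
      (fun i hi => by have := hTs (hLT hi); simpa [supp] using this) (hTi.mono (by exact_mod_cast hLT)) hL
    have h2 := Nat.mul_le_mul_right (#L) (Zc_le a)
    have h3 := h2.trans h1
    set U := T \ L with hU
    have hUc : #U = dv a - dv a / 2 := by rw [hU, card_sdiff_of_subset hLT, hTc, hLc]
    have h4 := choose_half_sq (#U)
    have hUn : #U ≤ n := card_le_univ _
    have hcomp : #Uᶜ = n - #U := card_compl U
    have h5 : (Zc a * #L)^2 * (#U + 1) ≤ 4 * 4^n := by
      calc (Zc a * #L)^2 * (#U + 1) ≤ (2 * (2 ^ #Uᶜ * (#U).choose (#U / 2)))^2 * (#U + 1) := by gcongr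
        _ = 4 * 4 ^ (n - #U) * ((#U).choose (#U / 2)^2 * (#U + 1)) := by
            rw [hcomp, mul_pow, mul_pow, ← pow_mul, mul_comm _ 2, pow_mul]; norm_num; ring
        _ ≤ 4 * 4 ^ (n - #U) * 4 ^ #U := by gcongr
        _ = _ := by rw [mul_assoc, ← pow_add, Nat.sub_add_cancel hUn]
    have h6 : dv a ≤ 3 * #L := by omega
    have h7 : dv a ≤ 2 * (#U + 1) := by omega
    calc (Zc a)^2 * (dv a)^3 = (Zc a)^2 * ((dv a)^2 * dv a) := by ring
      _ ≤ (Zc a)^2 * ((3 * #L)^2 * (2 * (#U + 1))) := by gcongr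
      _ = 18 * ((Zc a * #L)^2 * (#U + 1)) := by ring
      _ ≤ 18 * (4 * 4^n) := by gcongr
      _ = _ := by ring

theorem Zc_comb (a : ι → ℝ) : (Zc a)^8 * ((dv a)^9 * (#(supp a) + 1)) ≤ 72^3 * (2 ^ Fintype.card ι)^8 := by
  have h1 := Zc_SS a
  have h2 := Zc_sqrt a
  have h4 : (4:ℕ)^(Fintype.card ι) = (2^(Fintype.card ι))^2 := by
    rw [← pow_mul, mul_comm, pow_mul]; norm_num
  rw [h4] at h1 h2
  calc (Zc a)^8 * ((dv a)^9 * (#(supp a) + 1)) = ((Zc a)^2 * (dv a)^3)^3 * ((Zc a)^2 * (#(supp a) + 1)) := by ring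
    _ ≤ (72 * (2^(Fintype.card ι))^2)^3 * (2^(Fintype.card ι))^2 := by gcongr
    _ = _ := by ring
end LO


def Orth {κ ι : Type*} [Fintype ι] (X : κ → ι → Bool) (a : ι → ℝ) : Prop :=
  ∀ j, ∑ i, sg (X j i) * a i = 0

section Det
variable {ι κ : Type*} [Fintype ι] [DecidableEq ι] [Fintype κ] [DecidableEq κ]

theorem exists_det (W : Submodule ℝ (ι → ℝ)) (d : ℕ) (hd : Module.finrank ℝ W ≤ d)
    (X : κ → ι → Bool) :
    ∃ I : Finset κ, #I ≤ d ∧ ∀ a ∈ W, (∀ j ∈ I, ∑ i, sg (X j i) * a i = 0) → Orth X a := by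
  let f : κ → Module.Dual ℝ W := fun j =>
    ((∑ i, sg (X j i) • (LinearMap.proj i : (ι → ℝ) →ₗ[ℝ] ℝ)) : (ι → ℝ) →ₗ[ℝ] ℝ).comp W.subtype
  have hf : ∀ j (a : W), f j a = ∑ i, sg (X j i) * (a : ι → ℝ) i := by
    intro j a; simp [f]
  obtain ⟨κ', g, hg, hs, hli⟩ := exists_linearIndependent' ℝ f
  have : Finite κ' := Finite.of_injective g hg
  have : Fintype κ' := Fintype.ofFinite κ'
  refine ⟨univ.image g, ?_, ?_⟩
  · calc #(univ.image g) ≤ Fintype.card κ' := card_image_le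
      _ ≤ Module.finrank ℝ (Module.Dual ℝ W) := hli.fintype_card_le_finrank
      _ = Module.finrank ℝ W := Subspace.dual_finrank_eq
      _ ≤ d := hd
  · intro a ha h j
    have h1 : f j ∈ Submodule.span ℝ (Set.range (f ∘ g)) := by
      rw [hs]; exact Submodule.subset_span ⟨j, rfl⟩
    have h2 : Submodule.span ℝ (Set.range (f ∘ g)) ≤
        LinearMap.ker (LinearMap.applyₗ (R := ℝ) (⟨a, ha⟩ : W) : Module.Dual ℝ W →ₗ[ℝ] ℝ) := by
      rw [Submodule.span_le]
      rintro _ ⟨k, rfl⟩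
      simp only [Function.comp, SetLike.mem_coe, LinearMap.mem_ker, LinearMap.applyₗ_apply_apply]
      rw [hf]
      exact h (g k) (by simp)
    have h3 := h2 h1
    simp only [LinearMap.mem_ker, LinearMap.applyₗ_apply_apply] at h3
    rw [hf] at h3
    exact h3

open scoped Classical in
theorem det_count_I (W : Submodule ℝ (ι → ℝ)) (P : (ι → ℝ) → Prop) (r : ℝ) (hr : 0 ≤ r)
    (hP : ∀ a, a ≠ 0 → P a → (Zc a : ℝ) ≤ r * 2 ^ Fintype.card ι) (I : Finset κ) :
    (#{X : κ → ι → Bool | (∃ a ∈ W, a ≠ 0 ∧ P a ∧ Orth X a) ∧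
      ∀ a ∈ W, (∀ j ∈ I, ∑ i, sg (X j i) * a i = 0) → Orth X a} : ℝ)
      ≤ r ^ (Fintype.card κ - #I) * 2 ^ (Fintype.card ι * Fintype.card κ) := by
  let n := Fintype.card ι
  let Pr : ({j // j ∈ I} → ι → Bool) → (ι → ℝ) → Prop := fun Y a => a ∈ W ∧ a ≠ 0 ∧ P a ∧ Orth Y a
  let ch : ({j // j ∈ I} → ι → Bool) → (ι → ℝ) := fun Y => if h : ∃ a, Pr Y a then h.choose else 0
  let zs : (ι → ℝ) → Finset (ι → Bool) := fun a => {x | ∑ i, sg (x i) * a i = 0}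
  let E := Equiv.piEquivPiSubtypeProd (fun j : κ => j ∈ I) (fun _ => ι → Bool)
  let S : Finset (Σ _ : ({j // j ∈ I} → ι → Bool), ({j // j ∉ I} → ι → Bool)) :=
    (univ.filter (fun Y => ∃ a, Pr Y a)).sigma (fun Y => Fintype.piFinset (fun _ => zs (ch Y)))
  have h1 : #{X : κ → ι → Bool | (∃ a ∈ W, a ≠ 0 ∧ P a ∧ Orth X a) ∧
      ∀ a ∈ W, (∀ j ∈ I, ∑ i, sg (X j i) * a i = 0) → Orth X a} ≤ #S := by
    apply Finset.card_le_card_of_injOn (fun X => ⟨(E X).1, (E X).2⟩)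
    · intro X hX
      simp only [coe_filter, mem_univ, true_and, Set.mem_ofPred_eq] at hX
      obtain ⟨⟨a, haW, ha0, haP, haO⟩, hdet⟩ := hX
      have hex : ∃ a, Pr (E X).1 a := ⟨a, haW, ha0, haP, fun j => haO j⟩
      have hch : Pr (E X).1 (ch (E X).1) := by
        simp only [ch, hex, dif_pos]; exact hex.choose_spec
      simp only [S, coe_sigma, Set.mem_sigma_iff, mem_coe, mem_filter, mem_univ, true_and,
        Fintype.mem_piFinset]
      refine ⟨hex, fun j => ?_⟩
      simp only [zs, mem_filter, mem_univ, true_and]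
      exact hdet _ hch.1 (fun j hj => hch.2.2.2 ⟨j, hj⟩) j
    · intro X _ X' _ he
      apply E.injective
      simp only [Sigma.mk.injEq, heq_eq_eq] at he
      exact Prod.ext he.1 he.2
  have h2 : (#S : ℝ) ≤ 2 ^ (n * #I) * (r * 2 ^ n) ^ (Fintype.card κ - #I) := by
    rw [card_sigma]
    push_cast
    calc _ ≤ ∑ Y ∈ univ.filter (fun Y => ∃ a, Pr Y a), (r * 2 ^ n) ^ (Fintype.card κ - #I) := by
          apply sum_le_sum
          intro Y hY
          have hex := (mem_filter.1 hY).2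
          have hch : Pr Y (ch Y) := by
            simp only [ch, hex, dif_pos]; exact hex.choose_spec
          rw [Fintype.card_piFinset]
          rw [prod_const, card_univ]
          have hc : Fintype.card {j // j ∉ I} = Fintype.card κ - #I := by
            rw [Fintype.card_subtype_compl, Fintype.card_coe]
          rw [hc]
          have := hP _ hch.2.1 hch.2.2.1
          rw [Nat.cast_pow]
          refine pow_le_pow_left₀ (Nat.cast_nonneg _) ?_ _
          refine le_trans (le_of_eq ?_) this
          unfold Zc
          congr!
      _ ≤ _ := by
          rw [sum_const, nsmul_eq_mul]
          gcongr
          have : #(univ.filter (fun Y : {j // j ∈ I} → ι → Bool => ∃ a, Pr Y a)) ≤ 2 ^ (n * #I) := by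
            refine (card_le_univ _).trans ?_
            simp [n, pow_mul]
          exact_mod_cast this
  have hI : #I ≤ Fintype.card κ := card_le_univ _
  calc _ ≤ (#S : ℝ) := by exact_mod_cast h1
    _ ≤ _ := h2
    _ = _ := by
      rw [mul_pow, ← pow_mul, mul_left_comm, ← pow_add, ← mul_add, add_tsub_cancel_of_le hI]

open scoped Classical in
theorem det_count (W : Submodule ℝ (ι → ℝ)) (d : ℕ) (hd : Module.finrank ℝ W ≤ d)
    (P : (ι → ℝ) → Prop) (r : ℝ) (hr : 0 ≤ r) (hr1 : r ≤ 1)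
    (hP : ∀ a, a ≠ 0 → P a → (Zc a : ℝ) ≤ r * 2 ^ Fintype.card ι) :
    (#{X : κ → ι → Bool | ∃ a ∈ W, a ≠ 0 ∧ P a ∧ Orth X a} : ℝ)
      ≤ #{I : Finset κ | #I ≤ d} *
        (r ^ (Fintype.card κ - d) * 2 ^ (Fintype.card ι * Fintype.card κ)) := by
  have h1 : ({X : κ → ι → Bool | ∃ a ∈ W, a ≠ 0 ∧ P a ∧ Orth X a} : Finset _) ⊆
      ({I : Finset κ | #I ≤ d} : Finset _).biUnion (fun I =>
      ({X : κ → ι → Bool | (∃ a ∈ W, a ≠ 0 ∧ P a ∧ Orth X a) ∧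
      ∀ a ∈ W, (∀ j ∈ I, ∑ i, sg (X j i) * a i = 0) → Orth X a} : Finset _)) := by
    intro X hX
    obtain ⟨I, hI, h⟩ := exists_det W d hd X
    simp only [mem_biUnion, mem_filter, mem_univ, true_and] at hX ⊢
    exact ⟨I, hI, hX, h⟩
  have h2 := (card_le_card h1).trans card_biUnion_le
  have h3 : (#{X : κ → ι → Bool | ∃ a ∈ W, a ≠ 0 ∧ P a ∧ Orth X a} : ℝ) ≤
    ∑ I ∈ ({I : Finset κ | #I ≤ d} : Finset _), (#{X : κ → ι → Bool | (∃ a ∈ W, a ≠ 0 ∧ P a ∧ Orth X a) ∧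
      ∀ a ∈ W, (∀ j ∈ I, ∑ i, sg (X j i) * a i = 0) → Orth X a} : ℝ) := by exact_mod_cast h2
  refine h3.trans ?_
  rw [← nsmul_eq_mul, ← sum_const]
  apply sum_le_sum
  intro I hI
  refine (det_count_I W P r hr hP I).trans ?_
  gcongr ?_ * _
  have := (mem_filter.1 hI).2
  exact pow_le_pow_of_le_one hr hr1 (by omega)

end Det


section Struct
variable {ι κ : Type*} [Fintype ι] [DecidableEq ι] [Fintype κ] [DecidableEq κ]

theorem small_subsets (K : ℕ) :
    (#{S : Finset ι | #S ≤ K} : ℝ) ≤ (9/8)^(Fintype.card ι) * 8^K := by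
  have h := Fintype.sum_pow_mul_eq_add_pow ι (1/8 : ℝ) 1
  simp only [one_pow, mul_one] at h
  have h2 : ∑ S ∈ ({S : Finset ι | #S ≤ K} : Finset _), (1/8 : ℝ)^K ≤ ∑ S : Finset ι, (1/8 : ℝ)^(#S) := by
    calc _ ≤ ∑ S ∈ ({S : Finset ι | #S ≤ K} : Finset _), (1/8 : ℝ)^(#S) := by
          apply sum_le_sum
          intro S hS
          exact pow_le_pow_of_le_one (by norm_num) (by norm_num) (mem_filter.1 hS).2
      _ ≤ _ := sum_le_sum_of_subset_of_nonneg (filter_subset _ _) (fun _ _ _ => by positivity)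
  rw [h, sum_const, nsmul_eq_mul] at h2
  have h3 : (1/8:ℝ)^K * 8^K = 1 := by rw [← mul_pow]; norm_num
  calc (#{S : Finset ι | #S ≤ K} : ℝ) = #{S : Finset ι | #S ≤ K} * (1/8:ℝ)^K * 8^K := by
        rw [mul_assoc, h3, mul_one]
    _ ≤ (1/8+1)^(Fintype.card ι) * 8^K := by gcongr
    _ = _ := by norm_num

open scoped Classical in
theorem countA (K : ℕ) :
    (#{X : κ → ι → Bool | ∃ a, a ≠ 0 ∧ #(supp a) ≤ K ∧ Orth X a} : ℝ)
      ≤ #{S : Finset ι | #S ≤ K} * (#{I : Finset κ | #I ≤ K} *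
        ((1/2) ^ (Fintype.card κ - K) * 2 ^ (Fintype.card ι * Fintype.card κ))) := by
  let W : Finset ι → Submodule ℝ (ι → ℝ) := fun S =>
    Submodule.span ℝ ((S.image (fun i => (Pi.single i 1 : ι → ℝ)) : Finset (ι → ℝ)) : Set (ι → ℝ))
  have hsub : ({X : κ → ι → Bool | ∃ a, a ≠ 0 ∧ #(supp a) ≤ K ∧ Orth X a} : Finset _) ⊆
      ({S : Finset ι | #S ≤ K} : Finset _).biUnion (fun S =>
        {X : κ → ι → Bool | ∃ a ∈ W S, a ≠ 0 ∧ True ∧ Orth X a}) := by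
    intro X hX
    simp only [mem_biUnion, mem_filter, mem_univ, true_and] at hX ⊢
    obtain ⟨a, ha, hs, hO⟩ := hX
    refine ⟨supp a, hs, a, ?_, ha, hO⟩
    have : a = ∑ i ∈ supp a, a i • (Pi.single i 1 : ι → ℝ) := by
      funext k
      simp only [Finset.sum_apply, Pi.smul_apply, Pi.single_apply, smul_eq_mul, mul_ite, mul_one, mul_zero]
      rw [sum_ite_eq]
      by_cases h : a k = 0 <;> simp [supp, h]
    rw [this]
    apply Submodule.sum_mem
    intro i hi
    refine Submodule.smul_mem _ _ (Submodule.subset_span ?_)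
    simp only [coe_image, Set.mem_image, mem_coe]
    refine ⟨i, ?_, rfl⟩
    rw [← this]; exact hi
  have h2 := (card_le_card hsub).trans card_biUnion_le
  have h3 : (#{X : κ → ι → Bool | ∃ a, a ≠ 0 ∧ #(supp a) ≤ K ∧ Orth X a} : ℝ) ≤
      ∑ S ∈ ({S : Finset ι | #S ≤ K} : Finset _),
        (#{X : κ → ι → Bool | ∃ a ∈ W S, a ≠ 0 ∧ True ∧ Orth X a} : ℝ) := by exact_mod_cast h2
  refine h3.trans ?_
  rw [← nsmul_eq_mul, ← sum_const]
  apply sum_le_sum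
  intro S hS
  apply det_count (W S) K _ (fun _ => True) (1/2) (by norm_num) (by norm_num)
  · intro a ha _
    have := Zc_half a ha
    have h' : (2:ℝ) * Zc a ≤ 2 ^ Fintype.card ι := by exact_mod_cast this
    linarith
  · exact (finrank_span_finset_le_card _).trans (card_image_le.trans (mem_filter.1 hS).2)

open scoped Classical in
theorem countA' (n m K : ℕ) (hn : Fintype.card ι = n) (hm : Fintype.card κ = m) (h1 : n ≤ m + 1)
    (h2 : m ≤ n) (hK : 16 * K ≤ n) (hn2 : 2 ≤ n) :
    (#{X : κ → ι → Bool | ∃ a, a ≠ 0 ∧ #(supp a) ≤ K ∧ Orth X a} : ℝ)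
      ≤ 2 * (9/10)^n * 2 ^ (n * m) := by
  refine (countA K).trans ?_
  have hA := small_subsets (ι := ι) K
  have hB := small_subsets (ι := κ) K
  rw [hn] at hA; rw [hm] at hB
  rw [hn, hm]
  have hKm : K ≤ m := by omega
  have e1 : (1/2:ℝ)^(m-K) ≤ 2 * (1/2)^n * 2^K := by
    have : (1/2:ℝ)^(m-K) = (1/2)^m * 2^K := by
      have h' : (1/2:ℝ)^m = (1/2)^(m-K) * (1/2)^K := by rw [← pow_add, Nat.sub_add_cancel hKm]
      rw [h', mul_assoc, ← mul_pow]; norm_num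
    rw [this]
    gcongr
    have h' : (1/2:ℝ)^(m+1) ≤ (1/2)^n := pow_le_pow_of_le_one (by norm_num) (by norm_num) h1
    have h'' : (1/2:ℝ)^m = 2 * (1/2)^(m+1) := by rw [pow_succ]; ring
    have h3 : (1/2:ℝ)^m ≤ (1/2)^(n-1) := pow_le_pow_of_le_one (by norm_num) (by norm_num) (by omega)
    have h4 : (1/2:ℝ)^(n-1) = 2 * (1/2)^n := by
      obtain ⟨k, rfl⟩ : ∃ k, n = k+1 := ⟨n-1, by omega⟩
      rw [Nat.add_sub_cancel, pow_succ]; ring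
    linarith
  have hB' : (#{I : Finset κ | #I ≤ K} : ℝ) ≤ (9/8)^n * 8^K := by
    refine hB.trans ?_
    gcongr
    norm_num
  have e2 : (128:ℝ)^K ≤ (64/45)^n := by
    calc (128:ℝ)^K ≤ ((64/45)^16)^K := by gcongr; norm_num
      _ = (64/45)^(16*K) := by rw [pow_mul]
      _ ≤ _ := pow_le_pow_right₀ (by norm_num) hK
  calc _ ≤ ((9/8)^n * 8^K) * (((9/8)^n * 8^K) * ((2 * (1/2)^n * 2^K) * 2 ^ (n * m) : ℝ)) := by
        gcongr
    _ = 2 * ((9/8)^n * (9/8)^n * (1/2)^n) * (8^K * 8^K * 2^K) * 2^(n*m) := by ring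
    _ = 2 * (81/128)^n * 128^K * 2^(n*m) := by
        rw [← mul_pow, ← mul_pow, ← mul_pow, ← mul_pow]; norm_num
    _ ≤ 2 * (81/128)^n * (64/45)^n * 2^(n*m) := by gcongr
    _ = _ := by
        rw [mul_assoc 2, ← mul_pow]; norm_num

open scoped Classical in
theorem countB (s : ℕ) (hs : 1 ≤ s) (P : (ι → ℝ) → Prop) (r : ℝ) (hr : 0 ≤ r) (hr1 : r ≤ 1)
    (hP : ∀ a, a ≠ 0 → (dv a = s ∧ P a) → (Zc a : ℝ) ≤ r * 2 ^ Fintype.card ι) :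
    (#{X : κ → ι → Bool | ∃ a, a ≠ 0 ∧ (dv a = s ∧ P a) ∧ Orth X a} : ℝ)
      ≤ (3*s)^(Fintype.card ι) * (2^(Fintype.card κ) *
        (r ^ (Fintype.card κ - s) * 2 ^ (Fintype.card ι * Fintype.card κ))) := by
  let w : (ι → SignType × Fin s) → Fin s → (ι → ℝ) := fun f c i =>
    if (f i).2 = c then ((f i).1 : ℝ) else 0
  let W : (ι → SignType × Fin s) → Submodule ℝ (ι → ℝ) := fun f =>
    Submodule.span ℝ ((univ.image (w f) : Finset (ι → ℝ)) : Set (ι → ℝ))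
  have hsub : ({X : κ → ι → Bool | ∃ a, a ≠ 0 ∧ (dv a = s ∧ P a) ∧ Orth X a} : Finset _) ⊆
      (univ : Finset (ι → SignType × Fin s)).biUnion (fun f =>
        {X : κ → ι → Bool | ∃ a ∈ W f, a ≠ 0 ∧ (dv a = s ∧ P a) ∧ Orth X a}) := by
    intro X hX
    simp only [mem_biUnion, mem_filter, mem_univ, true_and] at hX ⊢
    obtain ⟨a, ha, ⟨hd, hPa⟩, hO⟩ := hX
    let e : {x // x ∈ (supp a).image (fun i => |a i|)} ≃ Fin s :=
      Fintype.equivFinOfCardEq (by rw [Fintype.card_coe]; exact hd)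
    have hmem : ∀ i, a i ≠ 0 → |a i| ∈ (supp a).image (fun i => |a i|) := fun i hi =>
      mem_image_of_mem (fun i => |a i|) (by simpa [supp] using hi)
    let f : ι → SignType × Fin s := fun i =>
      (SignType.sign (a i), if h : a i ≠ 0 then e ⟨|a i|, hmem i h⟩ else ⟨0, hs⟩)
    refine ⟨f, a, ?_, ha, ⟨hd, hPa⟩, hO⟩
    have : a = ∑ c, ((e.symm c : ℝ)) • w f c := by
      funext k
      simp only [Finset.sum_apply, Pi.smul_apply, w, smul_eq_mul, mul_ite, mul_zero]
      rw [sum_ite_eq]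
      by_cases h : a k = 0
      · simp [f, h]
      · simp only [f, mem_univ, if_true, ne_eq, h, not_false_eq_true, dif_pos, Equiv.symm_apply_apply]
        rw [mul_comm]; exact (sign_mul_abs (a k)).symm
    rw [this]
    apply Submodule.sum_mem
    intro i _
    refine Submodule.smul_mem _ _ (Submodule.subset_span ?_)
    simp
  have h2 := (card_le_card hsub).trans card_biUnion_le
  have h3 : (#{X : κ → ι → Bool | ∃ a, a ≠ 0 ∧ (dv a = s ∧ P a) ∧ Orth X a} : ℝ) ≤
      ∑ f : (ι → SignType × Fin s),
        (#{X : κ → ι → Bool | ∃ a ∈ W f, a ≠ 0 ∧ (dv a = s ∧ P a) ∧ Orth X a} : ℝ) := by exact_mod_cast h2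
  refine h3.trans ?_
  have hc : ((3*s:ℝ))^(Fintype.card ι) = #(univ : Finset (ι → SignType × Fin s)) := by
    rw [card_univ, Fintype.card_fun, Fintype.card_prod, Fintype.card_fin]
    have : Fintype.card SignType = 3 := by decide
    rw [this]; push_cast; rfl
  rw [hc, ← nsmul_eq_mul, ← sum_const]
  apply sum_le_sum
  intro f _
  refine (det_count (W f) s ?_ (fun a => dv a = s ∧ P a) r hr hr1 hP).trans ?_
  · refine (finrank_span_finset_le_card _).trans (card_image_le.trans ?_)
    simp
  · gcongr
    have : #{I : Finset κ | #I ≤ s} ≤ 2^(Fintype.card κ) := by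
      refine (card_le_univ _).trans ?_
      simp
    exact_mod_cast this

/-- the constant -/
def CC : ℕ := 16 * 72^3

open scoped Classical in
theorem countB' (n m s : ℕ) (hn : Fintype.card ι = n) (hm : Fintype.card κ = m) (h1 : n ≤ m + 1)
    (h2 : m ≤ n) (hs : 1 ≤ s) (hsn : 9 * (s+1) ≤ n) (hbig : 24^9 * CC ≤ n) :
    (#{X : κ → ι → Bool | ∃ a, a ≠ 0 ∧ (dv a = s ∧ n ≤ 16 * (#(supp a) + 1)) ∧ Orth X a} : ℝ)
      ≤ (1/4)^n * 2 ^ (n * m) := by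
  have hn0 : (0:ℝ) < n := by
    have : 0 < n := by omega
    exact_mod_cast this
  have hs0 : (0:ℝ) < s := by exact_mod_cast hs
  have hbig' : (24:ℝ)^9 * CC ≤ n := by exact_mod_cast hbig
  have hC0 : (0:ℝ) ≤ CC := Nat.cast_nonneg _
  generalize hCC : (CC:ℝ) = C at *
  set q : ℝ := C / (n * s^9) with hq
  have hq0 : 0 ≤ q := by positivity
  set r0 : ℝ := q ^ ((8:ℕ):ℝ)⁻¹ with hr0
  have hr08 : r0^8 = q := Real.rpow_inv_natCast_pow hq0 (by norm_num)
  have hr00 : 0 ≤ r0 := Real.rpow_nonneg hq0 _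
  set r := min 1 r0 with hr
  have hr_nonneg : 0 ≤ r := le_min zero_le_one hr00
  have hr1 : r ≤ 1 := min_le_left _ _
  have hr8 : r^8 ≤ q := by rw [← hr08]; exact pow_le_pow_left₀ hr_nonneg (min_le_right _ _) 8
  have hZ : ∀ a : ι → ℝ, a ≠ 0 → (dv a = s ∧ n ≤ 16 * (#(supp a) + 1)) →
      (Zc a : ℝ) ≤ r * 2 ^ Fintype.card ι := by
    rintro a ha ⟨hd, hk⟩
    have hc := Zc_comb a
    rw [hd, hn] at hc
    rw [hn]
    have hc' : (Zc a)^8 * (s^9 * n) ≤ CC * (2^n)^8 := by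
      calc (Zc a)^8 * (s^9 * n) ≤ (Zc a)^8 * (s^9 * (16 * (#(supp a) + 1))) := by gcongr
        _ = 16 * ((Zc a)^8 * (s^9 * (#(supp a) + 1))) := by ring
        _ ≤ 16 * (72^3 * (2^n)^8) := by gcongr
        _ = _ := by unfold CC; ring
    have hc2 : (Zc a : ℝ)^8 * (s^9 * n) ≤ C * (2^n)^8 := by rw [← hCC]; exact_mod_cast hc'
    have hle : (Zc a : ℝ) ≤ r0 * 2^n := by
      refine le_of_pow_le_pow_left₀ (n := 8) (by norm_num) (by positivity) ?_
      rw [mul_pow, hr08, hq, div_mul_eq_mul_div, le_div_iff₀ (by positivity)]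
      linarith
    have hle1 : (Zc a : ℝ) ≤ 1 * 2^n := by
      have := Zc_half a ha
      rw [hn] at this
      have : (2:ℝ) * Zc a ≤ 2^n := by exact_mod_cast this
      have : (0:ℝ) ≤ Zc a := Nat.cast_nonneg _
      linarith
    rw [hr, min_mul_of_nonneg _ _ (by positivity)]
    exact le_min hle1 hle
  have hmain := countB (κ := κ) s hs (fun a : ι → ℝ => n ≤ 16 * (#(supp a) + 1)) r hr_nonneg hr1 hZ
  refine hmain.trans ?_
  rw [hn, hm]
  have hT : (3*s:ℝ)^n * r^(m-s) ≤ (1/8)^n := by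
    refine le_of_pow_le_pow_left₀ (n := 9) (by norm_num) (by positivity) ?_
    calc ((3*s:ℝ)^n * r^(m-s))^9 = ((3*s:ℝ)^9)^n * r^(9*(m-s)) := by
          rw [mul_pow, ← pow_mul, ← pow_mul, ← pow_mul, mul_comm n 9, mul_comm (m-s) 9]
      _ ≤ ((3*s:ℝ)^9)^n * r^(8*n) := by
          gcongr ?_ * ?_
          exact pow_le_pow_of_le_one hr_nonneg hr1 (by omega)
      _ = ((3*s:ℝ)^9 * r^8)^n := by rw [mul_pow _ (r^8), ← pow_mul r]
      _ ≤ ((1/8)^9)^n := by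
          gcongr
          calc (3*s:ℝ)^9 * r^8 ≤ (3*s:ℝ)^9 * q := by gcongr
            _ = 3^9 * C / n := by rw [hq]; field_simp
            _ ≤ (1/8)^9 := by
              rw [div_le_iff₀ hn0]
              have : (24:ℝ)^9 * C = 8^9 * (3^9 * C) := by rw [← mul_assoc, ← mul_pow]; norm_num
              rw [this] at hbig'
              rw [one_div, inv_pow, ← div_eq_inv_mul, le_div_iff₀ (by positivity)]
              linarith
      _ = ((1/8)^n)^9 := by rw [← pow_mul, ← pow_mul, mul_comm]
  have h2m : (2:ℝ)^m ≤ 2^n := pow_le_pow_right₀ (by norm_num) h2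
  calc (3*s:ℝ)^n * (2^m * (r^(m-s) * 2^(n*m))) = ((3*s:ℝ)^n * r^(m-s)) * 2^m * 2^(n*m) := by ring
    _ ≤ (1/8)^n * 2^n * 2^(n*m) := by gcongr
    _ = _ := by rw [← mul_pow]; norm_num

open scoped Classical in
/-- structured kernel vectors are rare -/
theorem struct_count (n m : ℕ) (hn : Fintype.card ι = n) (hm : Fintype.card κ = m) (h1 : n ≤ m + 1)
    (h2 : m ≤ n) (hbig : 24^9 * CC ≤ n) :
    (#{X : κ → ι → Bool | ∃ a, a ≠ 0 ∧ 9 * (dv a + 1) ≤ n ∧ Orth X a} : ℝ)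
      ≤ 3 * (9/10)^n * 2 ^ (n * m) := by
  have hn2 : 2 ≤ n := le_trans (by norm_num [CC]) hbig
  have hsub : ({X : κ → ι → Bool | ∃ a, a ≠ 0 ∧ 9 * (dv a + 1) ≤ n ∧ Orth X a} : Finset _) ⊆
      ({X : κ → ι → Bool | ∃ a, a ≠ 0 ∧ #(supp a) ≤ n/16 ∧ Orth X a} : Finset _) ∪
      ((range (n+1)).filter (fun s => 1 ≤ s ∧ 9 * (s+1) ≤ n)).biUnion (fun s =>
        ({X : κ → ι → Bool | ∃ a, a ≠ 0 ∧ (dv a = s ∧ n ≤ 16 * (#(supp a) + 1)) ∧ Orth X a} : Finset _)) := by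
    intro X hX
    simp only [mem_union, mem_biUnion, mem_filter, mem_univ, true_and, mem_range] at hX ⊢
    obtain ⟨a, ha, hd, hO⟩ := hX
    by_cases h : #(supp a) ≤ n/16
    · exact Or.inl ⟨a, ha, h, hO⟩
    · exact Or.inr ⟨dv a, ⟨by omega, dv_pos a ha, hd⟩, a, ha, ⟨rfl, by omega⟩, hO⟩
  have hc := (card_le_card hsub).trans ((card_union_le _ _).trans (Nat.add_le_add_left card_biUnion_le _))
  have hc' : (#{X : κ → ι → Bool | ∃ a, a ≠ 0 ∧ 9 * (dv a + 1) ≤ n ∧ Orth X a} : ℝ) ≤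
      (#{X : κ → ι → Bool | ∃ a, a ≠ 0 ∧ #(supp a) ≤ n/16 ∧ Orth X a} : ℝ) +
      ∑ s ∈ (range (n+1)).filter (fun s => 1 ≤ s ∧ 9 * (s+1) ≤ n),
      (#{X : κ → ι → Bool | ∃ a, a ≠ 0 ∧ (dv a = s ∧ n ≤ 16 * (#(supp a) + 1)) ∧ Orth X a} : ℝ) := by
    exact_mod_cast hc
  have hA := countA' (ι := ι) (κ := κ) n m (n/16) hn hm h1 h2 (by omega) hn2
  have hB : ∑ s ∈ (range (n+1)).filter (fun s => 1 ≤ s ∧ 9 * (s+1) ≤ n),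
      (#{X : κ → ι → Bool | ∃ a, a ≠ 0 ∧ (dv a = s ∧ n ≤ 16 * (#(supp a) + 1)) ∧ Orth X a} : ℝ)
      ≤ (n+1) * ((1/4)^n * 2 ^ (n * m)) := by
    calc _ ≤ ∑ s ∈ (range (n+1)).filter (fun s => 1 ≤ s ∧ 9 * (s+1) ≤ n), ((1/4:ℝ)^n * 2 ^ (n * m)) := by
          apply sum_le_sum
          intro s hs
          simp only [mem_filter] at hs
          exact countB' n m s hn hm h1 h2 hs.2.1 hs.2.2 hbig
      _ ≤ _ := by
          rw [sum_const, nsmul_eq_mul]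
          gcongr
          have := (card_filter_le (range (n+1)) (fun s => 1 ≤ s ∧ 9 * (s+1) ≤ n))
          rw [card_range] at this
          exact_mod_cast this
  have hpow : ((n:ℝ)+1) * (1/4)^n ≤ (9/10)^n := by
    have h2n : ((n:ℝ)+1) ≤ 2^n := by exact_mod_cast Nat.lt_two_pow_self
    calc ((n:ℝ)+1) * (1/4)^n ≤ 2^n * (1/4)^n := by gcongr
      _ = (1/2)^n := by rw [← mul_pow]; norm_num
      _ ≤ _ := pow_le_pow_left₀ (by norm_num) (by norm_num) n
  have : (n+1) * ((1/4)^n * 2 ^ (n * m)) ≤ (9/10:ℝ)^n * 2^(n*m) := by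
    rw [← mul_assoc]; gcongr
  linarith
end Struct


section Sing
variable {ι : Type*} [Fintype ι] [DecidableEq ι]

theorem exists_orth {κ : Type*} [Fintype κ] (h : Fintype.card κ < Fintype.card ι) (Y : κ → ι → Bool) :
    ∃ a : ι → ℝ, a ≠ 0 ∧ Orth Y a := by
  let f : (ι → ℝ) →ₗ[ℝ] (κ → ℝ) := Matrix.mulVecLin (fun j i => sg (Y j i))
  have hk : LinearMap.ker f ≠ ⊥ := LinearMap.ker_ne_bot_of_finrank_lt (by simpa using h)
  obtain ⟨a, ha, ha0⟩ := Submodule.exists_mem_ne_zero_of_ne_bot hk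
  refine ⟨a, ha0, fun j => ?_⟩
  have := congrFun (LinearMap.mem_ker.1 ha) j
  exact this

/-- row `j` lies in the span of the others -/
def Dep (j : ι) (X : ι → ι → Bool) : Prop :=
  ∃ b : ι → ℝ, b j ≠ 0 ∧ ∀ i, ∑ k, sg (X k i) * b k = 0

open scoped Classical in
theorem dep_count (n : ℕ) (hn : Fintype.card ι = n) (hbig : 24^9 * CC ≤ n) (r : ℝ) (hr0 : 0 ≤ r)
    (hr : ∀ a : ι → ℝ, a ≠ 0 → n < 9 * (dv a + 1) → (Zc a : ℝ) ≤ r * 2 ^ n) (j : ι) :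
    (#{X : ι → ι → Bool | Dep j X} : ℝ) ≤ (3 * (9/10)^n + r) * 2 ^ (n * n) := by
  have hn2 : 2 ≤ n := le_trans (by norm_num [CC]) hbig
  let κ := {k // k ≠ j}
  have hκ : Fintype.card κ = n - 1 := by
    simp only [κ, ne_eq, Fintype.card_subtype_compl, Fintype.card_unique, hn]
  have hex : ∀ Y : κ → ι → Bool, ∃ a : ι → ℝ, a ≠ 0 ∧ Orth Y a :=
    fun Y => exists_orth (by rw [hκ, hn]; omega) Y
  choose ch hch0 hchO using hex
  let zs : (ι → ℝ) → Finset (ι → Bool) := fun a => {x | ∑ i, sg (x i) * a i = 0}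
  let E := Equiv.piSplitAt j (fun _ : ι => ι → Bool)
  let St : Finset (κ → ι → Bool) := {Y | ∃ a, a ≠ 0 ∧ 9 * (dv a + 1) ≤ n ∧ Orth Y a}
  let S : Finset (Σ _ : (κ → ι → Bool), (ι → Bool)) := (Stᶜ).sigma (fun Y => zs (ch Y))
  let T : Finset (Σ _ : (κ → ι → Bool), (ι → Bool)) := St.sigma (fun Y => univ)
  have h1 : #{X : ι → ι → Bool | Dep j X} ≤ #(S ∪ T) := by
    apply Finset.card_le_card_of_injOn (fun X => ⟨(E X).2, (E X).1⟩)
    · intro X hX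
      simp only [coe_filter, mem_univ, true_and, Set.mem_ofPred_eq] at hX
      simp only [S, T, coe_union, coe_sigma, Set.mem_union, Set.mem_sigma_iff, mem_coe, mem_compl,
        mem_univ, and_true]
      by_cases hY : (E X).2 ∈ St
      · exact Or.inr hY
      · refine Or.inl ⟨hY, ?_⟩
        simp only [zs, mem_filter, mem_univ, true_and]
        obtain ⟨b, hbj, hb⟩ := hX
        set a := ch (E X).2 with ha
        have hO := hchO (E X).2
        rw [← ha] at hO
        have hO' : ∀ k, k ≠ j → ∑ i, sg (X k i) * a i = 0 := fun k hk => hO ⟨k, hk⟩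
        have hz : ∑ k, b k * ∑ i, sg (X k i) * a i = 0 := by
          simp_rw [mul_sum]
          rw [sum_comm]
          apply sum_eq_zero
          intro i _
          have := hb i
          calc ∑ k, b k * (sg (X k i) * a i) = (∑ k, sg (X k i) * b k) * a i := by
                rw [sum_mul]; exact sum_congr rfl (fun k _ => by ring)
            _ = 0 := by rw [this, zero_mul]
        rw [sum_eq_single j (fun k _ hk => by rw [hO' k hk, mul_zero]) (by simp)] at hz
        exact (mul_eq_zero.1 hz).resolve_left hbj
    · intro X _ X' _ he
      apply E.injective
      simp only [Sigma.mk.injEq, heq_eq_eq] at he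
      exact Prod.ext he.2 he.1
  have hS : (#S : ℝ) ≤ 2 ^ (n * (n-1)) * (r * 2^n) := by
    rw [card_sigma]
    push_cast
    calc _ ≤ ∑ Y ∈ Stᶜ, (r * 2^n) := by
          apply sum_le_sum
          intro Y hY
          have h9 : n < 9 * (dv (ch Y) + 1) := by
            by_contra hcon
            simp only [St, mem_compl, mem_filter, mem_univ, true_and] at hY
            exact hY ⟨ch Y, hch0 Y, not_lt.1 hcon, hchO Y⟩
          refine le_trans (le_of_eq ?_) (hr (ch Y) (hch0 Y) h9)
          unfold Zc
          congr!
      _ ≤ _ := by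
          rw [sum_const, nsmul_eq_mul]
          gcongr
          have : #Stᶜ ≤ 2 ^ (n * (n-1)) := by
            refine (card_le_univ _).trans ?_
            rw [Fintype.card_fun, Fintype.card_fun, hκ, hn, Fintype.card_bool, pow_mul]
          exact_mod_cast this
  have hT : (#T : ℝ) ≤ (3 * (9/10)^n * 2 ^ (n * (n-1))) * 2^n := by
    rw [card_sigma, sum_const, smul_eq_mul, card_univ, Fintype.card_fun, hn, Fintype.card_bool]
    push_cast
    gcongr
    exact struct_count n (n-1) hn hκ (by omega) (by omega) hbig
  have hU : (#(S ∪ T) : ℝ) ≤ #S + #T := by exact_mod_cast card_union_le S T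
  have h1' : (#{X : ι → ι → Bool | Dep j X} : ℝ) ≤ #(S ∪ T) := by exact_mod_cast h1
  have hp : (2:ℝ)^(n*n) = 2^(n*(n-1)) * 2^n := by
    rw [← pow_add]; congr 1
    obtain ⟨k, rfl⟩ : ∃ k, n = k+1 := ⟨n-1, by omega⟩
    simp; ring
  rw [hp]
  linarith

open scoped Classical in
theorem sing_count (n : ℕ) (hn : Fintype.card ι = n) (hbig : 24^9 * CC ≤ n) (r : ℝ) (hr0 : 0 ≤ r)
    (hr : ∀ a : ι → ℝ, a ≠ 0 → n < 9 * (dv a + 1) → (Zc a : ℝ) ≤ r * 2 ^ n) :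
    (#{X : ι → ι → Bool | ∃ a, a ≠ 0 ∧ Orth X a} : ℝ) ≤ (57 * (9/10)^n + 18 * r) * 2 ^ (n * n) := by
  have hn18 : 18 ≤ n := le_trans (by norm_num [CC]) hbig
  have hn0 : (0:ℝ) < n := by
    have : 0 < n := by omega
    exact_mod_cast this
  let tr : (ι → ι → Bool) → (ι → ι → Bool) := fun X i j => X j i
  let A : Finset (ι → ι → Bool) := {X | ∃ a, a ≠ 0 ∧ Orth X a}
  let St : Finset (ι → ι → Bool) := {X | ∃ a, a ≠ 0 ∧ 9 * (dv a + 1) ≤ n ∧ Orth X a}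
  let B : Finset (ι → ι → Bool) := {X | tr X ∈ St}
  have hB : #B ≤ #St := by
    apply Finset.card_le_card_of_injOn tr
    · intro X hX
      exact (mem_filter.1 hX).2
    · intro X _ Y _ h
      funext i j
      exact congrFun (congrFun h j) i
  have hSt := struct_count (ι := ι) (κ := ι) n n hn hn (by omega) le_rfl hbig
  have hdc : #(A \ B) * n ≤ 18 * ∑ j : ι, #{X : ι → ι → Bool | Dep j X} := by
    have h1 : ∀ X ∈ A \ B, n ≤ 18 * #{j : ι | Dep j X} := by
      intro X hX
      simp only [A, B, St, mem_sdiff, mem_filter, mem_univ, true_and] at hX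
      obtain ⟨⟨a, ha, hO⟩, hns⟩ := hX
      let M : Matrix ι ι ℝ := fun j i => sg (X j i)
      have hM : ∃ v, v ≠ 0 ∧ M.mulVec v = 0 := by
        refine ⟨a, ha, ?_⟩
        funext j
        exact hO j
      rw [Matrix.exists_mulVec_eq_zero_iff, ← Matrix.exists_vecMul_eq_zero_iff] at hM
      obtain ⟨b, hb, hbM⟩ := hM
      have hb' : ∀ i, ∑ k, sg (X k i) * b k = 0 := by
        intro i
        have := congrFun hbM i
        simp only [Matrix.vecMul, dotProduct, M, Pi.zero_apply] at this
        rw [← this]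
        exact sum_congr rfl (fun k _ => mul_comm _ _)
      have hlt : n < 9 * (dv b + 1) := by
        by_contra hcon
        exact hns ⟨b, hb, not_lt.1 hcon, hb'⟩
      have hsub : supp b ⊆ ({j : ι | Dep j X} : Finset ι) := by
        intro j hj
        simp only [supp, mem_filter, mem_univ, true_and] at hj ⊢
        exact ⟨b, hj, hb'⟩
      have := card_le_card hsub
      have := dv_le_supp b
      omega
    calc #(A \ B) * n = ∑ X ∈ A \ B, n := by rw [sum_const, smul_eq_mul]
      _ ≤ ∑ X ∈ A \ B, 18 * #{j : ι | Dep j X} := sum_le_sum h1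
      _ ≤ ∑ X : ι → ι → Bool, 18 * #{j : ι | Dep j X} :=
          sum_le_sum_of_subset (subset_univ _)
      _ = 18 * ∑ X : ι → ι → Bool, #{j : ι | Dep j X} := by rw [mul_sum]
      _ = _ := by
          congr 1
          simp_rw [card_filter]
          rw [sum_comm]
  have hdc' : (#(A \ B) : ℝ) * n ≤ 18 * (n * ((3 * (9/10)^n + r) * 2 ^ (n * n))) := by
    have h1 : (#(A \ B) : ℝ) * n ≤ 18 * ∑ j : ι, (#{X : ι → ι → Bool | Dep j X} : ℝ) := by
      exact_mod_cast hdc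
    refine h1.trans ?_
    gcongr
    calc _ ≤ ∑ j : ι, ((3 * (9/10)^n + r) * 2 ^ (n * n)) :=
          sum_le_sum (fun j _ => dep_count n hn hbig r hr0 hr j)
      _ = _ := by rw [sum_const, nsmul_eq_mul, card_univ, hn]
  have h3 : (#(A \ B) : ℝ) ≤ 18 * ((3 * (9/10)^n + r) * 2 ^ (n * n)) := by
    refine le_of_mul_le_mul_right ?_ hn0
    linarith
  have h4 : #A ≤ #(A \ B) + #B := by
    calc #A ≤ #((A \ B) ∪ B) := card_le_card (by intro x hx; by_cases h : x ∈ B <;> simp [hx, h])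
      _ ≤ _ := card_union_le _ _
  have h4' : (#A : ℝ) ≤ #(A \ B) + #B := by exact_mod_cast h4
  have hB' : (#B : ℝ) ≤ #St := by exact_mod_cast hB
  change (#A : ℝ) ≤ _
  change (#St : ℝ) ≤ _ at hSt
  linarith

/-- the bound on the probability -/
noncomputable def rr (n : ℕ) : ℝ := Real.sqrt (72 * 18^3 / n^3)

theorem rr_spec (n : ℕ) (hn : Fintype.card ι = n) (hn18 : 18 ≤ n) (a : ι → ℝ)
    (h : n < 9 * (dv a + 1)) : (Zc a : ℝ) ≤ rr n * 2 ^ n := by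
  have h1 := Zc_SS a
  rw [hn] at h1
  have h2 : n ≤ 18 * dv a := by omega
  have h3 : (Zc a)^2 * n^3 ≤ 72 * 18^3 * 4^n := by
    calc (Zc a)^2 * n^3 ≤ (Zc a)^2 * (18 * dv a)^3 := by gcongr
      _ = 18^3 * ((Zc a)^2 * (dv a)^3) := by ring
      _ ≤ 18^3 * (72 * 4^n) := by gcongr
      _ = _ := by ring
  have h3' : (Zc a : ℝ)^2 * n^3 ≤ 72 * 18^3 * 4^n := by exact_mod_cast h3
  have hn0 : (0:ℝ) < n := by
    have : 0 < n := by omega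
    exact_mod_cast this
  unfold rr
  refine le_of_pow_le_pow_left₀ (n := 2) (by norm_num) (by positivity) ?_
  rw [mul_pow, Real.sq_sqrt (by positivity), div_mul_eq_mul_div, le_div_iff₀ (by positivity)]
  have : ((2:ℝ)^n)^2 = 4^n := by rw [← pow_mul, mul_comm, pow_mul]; norm_num
  rw [this]; exact h3'
end Sing


theorem sg_beq (x y : Bool) : sg (x == y) = sg x * sg y := by
  cases x <;> cases y <;> simp [sg]

theorem sg_sq (x : Bool) : sg x * sg x = 1 := by
  cases x <;> simp [sg]

section Good
variable {ι : Type*} [Fintype ι] [DecidableEq ι]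

/-- `(l, c)` is in the kernel of `[V | 1]` -/
def Ker (V : ι → ι → Bool) (l : ι → ℝ) (c : ℝ) : Prop := ∀ p, ∑ i, sg (V p i) * l i + c = 0

def Good (V : ι → ι → Bool) : Prop :=
  ∀ l c, Ker V l c → (∃ i, l i = 0) → l = 0 ∧ c = 0

def Pos (V : ι → ι → Bool) : Prop := Good V ∧ ∃ l c, Ker V l c ∧ ∀ i, 0 < l i

open scoped Classical in
theorem bad_k (k : ι) :
    #{V : ι → ι → Bool | ∃ l c, Ker V l c ∧ l k = 0 ∧ ¬ (l = 0 ∧ c = 0)} ≤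
      #{X : ι → ι → Bool | ∃ a, a ≠ 0 ∧ Orth X a} := by
  set Bk : Finset (ι → ι → Bool) := {V : ι → ι → Bool | ∃ l c, Ker V l c ∧ l k = 0 ∧ ¬ (l = 0 ∧ c = 0)} with hBk
  set Sg : Finset (ι → ι → Bool) := {X : ι → ι → Bool | ∃ a, a ≠ 0 ∧ Orth X a} with hSg
  have h : #(Bk ×ˢ (univ : Finset (ι → Bool))) ≤ #(Sg ×ˢ (univ : Finset (ι → Bool))) := by
    apply Finset.card_le_card_of_injOn (fun q : (ι → ι → Bool) × (ι → Bool) =>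
      ((fun p i => if i = k then q.2 p else (q.1 p i == q.2 p)), (fun p => q.1 p k)))
    · rintro ⟨V, ε⟩ hV
      simp only [coe_product, Set.mem_prod, mem_coe, mem_univ, and_true, hBk, mem_filter,
        true_and, hSg] at hV ⊢
      obtain ⟨l, c, hK, hk, hne⟩ := hV
      refine ⟨fun i => if i = k then c else l i, ?_, ?_⟩
      · intro h0
        apply hne
        constructor
        · funext i
          by_cases hi : i = k
          · rw [hi, hk]; rfl
          · have := congrFun h0 i
            simpa [hi] using this
        · have := congrFun h0 k
          simpa using this
      · intro p
        have e : ∀ i, sg (if i = k then ε p else (V p i == ε p)) * (if i = k then c else l i) =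
            sg (ε p) * (sg (V p i) * l i + if i = k then c else 0) := by
          intro i
          by_cases hi : i = k
          · subst hi; simp [hk]
          · simp only [hi, if_false, sg_beq]; ring
        simp_rw [e]
        rw [← mul_sum, sum_add_distrib, sum_ite_eq']
        simp only [mem_univ, if_true]
        rw [hK p, mul_zero]
    · rintro ⟨V, ε⟩ _ ⟨V', ε'⟩ _ he
      simp only [Prod.mk.injEq] at he
      obtain ⟨h1, h2⟩ := he
      have hε : ε = ε' := by
        funext p
        have := congrFun (congrFun h1 p) k
        simpa using this
      subst hε
      have : V = V' := by
        funext p i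
        by_cases hi : i = k
        · rw [hi]; exact congrFun h2 p
        · have := congrFun (congrFun h1 p) i
          simp only [hi, if_false] at this
          revert this
          cases V p i <;> cases V' p i <;> cases ε p <;> simp
      rw [this]
  rw [card_product, card_product] at h
  exact Nat.le_of_mul_le_mul_right h (card_pos.2 ⟨fun _ => true, mem_univ _⟩)

open scoped Classical in
theorem bad_count (n : ℕ) (hn : Fintype.card ι = n) (hbig : 24^9 * CC ≤ n) :
    (#{V : ι → ι → Bool | ¬ Good V} : ℝ) ≤ n * ((57 * (9/10)^n + 18 * rr n) * 2 ^ (n * n)) := by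
  have hn18 : 18 ≤ n := le_trans (by norm_num [CC]) hbig
  have hs := sing_count (ι := ι) n hn hbig (rr n) (Real.sqrt_nonneg _)
    (fun a _ h => rr_spec n hn hn18 a h)
  have hsub : ({V : ι → ι → Bool | ¬ Good V} : Finset _) ⊆ univ.biUnion (fun k : ι =>
      ({V : ι → ι → Bool | ∃ l c, Ker V l c ∧ l k = 0 ∧ ¬ (l = 0 ∧ c = 0)} : Finset _)) := by
    intro V hV
    simp only [mem_biUnion, mem_filter, mem_univ, true_and] at hV ⊢
    unfold Good at hV
    push Not at hV
    obtain ⟨l, c, hK, ⟨k, hk⟩, hne⟩ := hV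
    exact ⟨k, l, c, hK, hk, fun h => hne h.1 h.2⟩
  have h2 := (card_le_card hsub).trans card_biUnion_le
  have h3 := h2.trans (sum_le_sum (fun k _ => bad_k k))
  rw [sum_const, card_univ, hn, smul_eq_mul] at h3
  calc (#{V : ι → ι → Bool | ¬ Good V} : ℝ) ≤ n * #{X : ι → ι → Bool | ∃ a, a ≠ 0 ∧ Orth X a} := by
        exact_mod_cast h3
    _ ≤ _ := by gcongr

def flip' (σ : ι → Bool) (V : ι → ι → Bool) : ι → ι → Bool := fun p i => (V p i == σ i)

theorem bflip_invol (σ : ι → Bool) (V : ι → ι → Bool) : flip' σ (flip' σ V) = V := by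
  funext p i
  simp only [flip']
  cases V p i <;> cases σ i <;> rfl

theorem ker_flip (σ : ι → Bool) (V : ι → ι → Bool) (l : ι → ℝ) (c : ℝ) (h : Ker V l c) :
    Ker (flip' σ V) (fun i => sg (σ i) * l i) c := by
  intro p
  rw [← h p]
  congr 1
  apply sum_congr rfl
  intro i _
  simp only [flip', sg_beq]
  linear_combination (sg (V p i) * l i) * sg_sq (σ i)

theorem sg_ne (b : Bool) : sg b ≠ 0 := by cases b <;> simp [sg]

theorem good_flip (σ : ι → Bool) (V : ι → ι → Bool) (h : Good V) : Good (flip' σ V) := by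
  intro l c hK ⟨i, hi⟩
  have h1 := ker_flip σ _ l c hK
  rw [bflip_invol] at h1
  obtain ⟨h2, h3⟩ := h _ _ h1 ⟨i, by rw [hi, mul_zero]⟩
  refine ⟨?_, h3⟩
  funext k
  have := congrFun h2 k
  exact (mul_eq_zero.1 this).resolve_left (sg_ne _)

theorem exists_ker (V : ι → ι → Bool) : ∃ l c, Ker V l c ∧ ¬ (l = 0 ∧ c = 0) := by
  obtain ⟨a, ha, hO⟩ := exists_orth (ι := Option ι) (κ := ι) (by simp)
    (fun p o => match o with | none => true | some i => V p i)
  refine ⟨fun i => a (some i), a none, ?_, ?_⟩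
  · intro p
    have := hO p
    rw [Fintype.sum_option] at this
    simp only [sg, if_true, one_mul] at this ⊢
    linarith
  · rintro ⟨h1, h2⟩
    apply ha
    funext o
    cases o with
    | none => exact h2
    | some i => exact congrFun h1 i

theorem ker_smul_sub (V : ι → ι → Bool) (l l' : ι → ℝ) (c c' t : ℝ) (h : Ker V l c) (h' : Ker V l' c') :
    Ker V (fun i => l' i - t * l i) (c' - t * c) := by
  intro p
  have e : ∀ i, sg (V p i) * (l' i - t * l i) = sg (V p i) * l' i - t * (sg (V p i) * l i) := fun i => by ring
  simp_rw [e]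
  rw [sum_sub_distrib, ← mul_sum]
  linear_combination h' p - t * h p

open scoped Classical in
theorem two_signs [Nonempty ι] (V : ι → ι → Bool) (h : Good V) :
    #{σ : ι → Bool | Pos (flip' σ V)} = 2 := by
  obtain ⟨l, c, hK, hne⟩ := exists_ker V
  have hl : ∀ i, l i ≠ 0 := fun i hi => hne (h l c hK ⟨i, hi⟩)
  obtain ⟨i0⟩ := ‹Nonempty ι›
  let σ0 : ι → Bool := fun i => decide (0 < l i)
  let σ1 : ι → Bool := fun i => decide (l i < 0)
  have hne' : σ0 ≠ σ1 := by
    intro he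
    have := congrFun he i0
    simp only [σ0, σ1, decide_eq_decide] at this
    rcases lt_or_gt_of_ne (hl i0) with h1 | h1
    · exact absurd (this.2 h1) (not_lt.2 h1.le)
    · exact absurd (this.1 h1) (not_lt.2 h1.le)
  have : ({σ : ι → Bool | Pos (flip' σ V)} : Finset _) = {σ0, σ1} := by
    ext σ
    simp only [mem_filter, mem_univ, true_and, mem_insert, mem_singleton]
    constructor
    · rintro ⟨_, l', c', hK', hpos⟩
      have h1 := ker_flip σ _ l' c' hK'
      rw [bflip_invol] at h1
      set t := (sg (σ i0) * l' i0) / l i0 with ht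
      have h2 := ker_smul_sub V l _ c c' t hK h1
      have h3 := (h _ _ h2 ⟨i0, by rw [ht]; have := hl i0; field_simp; ring⟩).1
      have h4 : ∀ i, sg (σ i) * l' i = t * l i := fun i => by
        have := congrFun h3 i
        simp only [Pi.zero_apply] at this
        linarith
      have ht0 : t ≠ 0 := by
        rw [ht]
        exact div_ne_zero (mul_ne_zero (sg_ne _) (hpos i0).ne') (hl i0)
      rcases lt_or_gt_of_ne ht0 with h5 | h5
      · right
        funext i
        have h6 := h4 i
        have h7 := hpos i
        simp only [σ1]
        cases hσ : σ i
        · rw [hσ] at h6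
          simp only [sg, Bool.false_eq_true, if_false] at h6
          symm; rw [decide_eq_false_iff_not]
          intro h8
          nlinarith [mul_pos_of_neg_of_neg h5 h8]
        · rw [hσ] at h6
          simp only [sg, if_true] at h6
          symm; rw [decide_eq_true_iff]
          by_contra h8
          nlinarith [mul_nonpos_of_nonpos_of_nonneg h5.le (not_lt.1 h8)]
      · left
        funext i
        have h6 := h4 i
        have h7 := hpos i
        simp only [σ0]
        cases hσ : σ i
        · rw [hσ] at h6
          simp only [sg, Bool.false_eq_true, if_false] at h6
          symm; rw [decide_eq_false_iff_not]
          intro h8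
          nlinarith [mul_pos h5 h8]
        · rw [hσ] at h6
          simp only [sg, if_true] at h6
          symm; rw [decide_eq_true_iff]
          by_contra h8
          nlinarith [mul_nonpos_of_nonneg_of_nonpos h5.le (not_lt.1 h8)]
    · rintro (rfl | rfl)
      · refine ⟨good_flip _ _ h, _, _, ker_flip σ0 V l c hK, fun i => ?_⟩
        rcases lt_or_gt_of_ne (hl i) with h1 | h1
        · simp [σ0, sg, h1, not_lt.2 h1.le]
        · simp [σ0, sg, h1]
      · have hK2 : Ker V (fun i => 0 - 1 * l i) (0 - 1 * c) := by
          apply ker_smul_sub V l (fun _ => 0) c 0 1 hK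
          intro p; simp
        refine ⟨good_flip _ _ h, _, _, ker_flip σ1 V _ _ hK2, fun i => ?_⟩
        rcases lt_or_gt_of_ne (hl i) with h1 | h1
        · simp [σ1, sg, h1]
        · simp [σ1, sg, h1, not_lt.2 h1.le]
  rw [this, card_pair hne']

open scoped Classical in
theorem pos_count [Nonempty ι] :
    2 ^ Fintype.card ι * #{V : ι → ι → Bool | Pos V} = 2 * #{V : ι → ι → Bool | Good V} := by
  have h1 : ∑ σ : ι → Bool, #{V : ι → ι → Bool | Pos (flip' σ V)} =
      ∑ V : ι → ι → Bool, #{σ : ι → Bool | Pos (flip' σ V)} := by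
    simp_rw [card_filter]
    rw [sum_comm]
  have h2 : ∀ σ : ι → Bool, #{V : ι → ι → Bool | Pos (flip' σ V)} = #{V : ι → ι → Bool | Pos V} := by
    intro σ
    apply Finset.card_bij (fun V _ => flip' σ V)
    · intro V hV; simpa using hV
    · intro V _ V' _ he
      rw [← bflip_invol σ V, he, bflip_invol]
    · intro V hV
      exact ⟨flip' σ V, by simpa [bflip_invol] using hV, bflip_invol σ V⟩
  have h3 : ∀ V : ι → ι → Bool, #{σ : ι → Bool | Pos (flip' σ V)} = if Good V then 2 else 0 := by
    intro V
    by_cases h : Good V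
    · rw [if_pos h, two_signs V h]
    · rw [if_neg h, card_eq_zero, filter_eq_empty_iff]
      intro σ _ hP
      have := good_flip σ _ hP.1
      rw [bflip_invol] at this
      exact h this
  simp_rw [h2, h3] at h1
  rw [sum_const, card_univ, Fintype.card_fun, Fintype.card_bool, smul_eq_mul, ← sum_filter, sum_const,
    smul_eq_mul] at h1
  rw [h1, mul_comm]
end Good



section Link
variable {n : ℕ}

def vf (f : Fin n → Finset (Fin n)) : Fin n → Fin n → Bool := fun p i => decide (p ∈ f i)

theorem ker_vf (f : Fin n → Finset (Fin n)) (l : Fin n → ℝ) (c : ℝ) :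
    Ker (vf f) l c ↔ ∀ p, 2 * ∑ i, (if p ∈ f i then l i else 0) = ∑ i, l i - c := by
  unfold Ker
  refine forall_congr' fun p => ?_
  have e : ∑ i, sg (vf f p i) * l i = 2 * ∑ i, (if p ∈ f i then l i else 0) - ∑ i, l i := by
    rw [mul_sum, ← sum_sub_distrib]
    refine sum_congr rfl fun i _ => ?_
    by_cases h : p ∈ f i
    · simp [vf, sg, h]; ring
    · simp [vf, sg, h]
  rw [e]
  constructor <;> intro h <;> linarith

theorem balanced_of_w (f : Fin n → Finset (Fin n)) (hf : Function.Injective f)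
    (hne : ∀ i, f i ≠ ∅) (w : Fin n → ℝ) (hw : ∀ i, 0 ≤ w i) (κ : ℝ) (hκ : 0 < κ)
    (h : ∀ p, ∑ i, (if p ∈ f i then w i else 0) = κ) :
    IsBalancedCollection ((univ.filter fun i => 0 < w i).image f) := by
  have hl : ∀ i, (∑ j, if f j = f i then w j / κ else 0) = w i / κ := by
    intro i
    have : ∀ j, (f j = f i) = (j = i) := fun j => propext hf.eq_iff
    simp [this]
  refine ⟨?_, fun S => ∑ i, if f i = S then w i / κ else 0, ?_, ?_⟩
  · intro S hS
    obtain ⟨i, _, rfl⟩ := mem_image.1 hS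
    exact hne i
  · intro S hS
    obtain ⟨i, hi, rfl⟩ := mem_image.1 hS
    simp only [hl]
    exact div_pos (mem_filter.1 hi).2 hκ
  · intro p
    rw [filter_image, sum_image (fun a _ b _ hab => hf hab)]
    simp only [hl]
    rw [sum_filter, sum_filter]
    have : ∀ i, (if 0 < w i then if p ∈ f i then w i / κ else 0 else 0) =
        (if p ∈ f i then w i else 0) / κ := by
      intro i
      by_cases h0 : 0 < w i
      · by_cases hp : p ∈ f i <;> simp [h0, hp]
      · have : w i = 0 := le_antisymm (not_lt.1 h0) (hw i)
        simp [this]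
    simp_rw [this]
    rw [← sum_div, h p, div_self hκ.ne']

theorem w_of_balanced (f : Fin n → Finset (Fin n)) (hf : Function.Injective f)
    (B : Finset (Finset (Fin n))) (hB : B ⊆ univ.image f) (lam : Finset (Fin n) → ℝ)
    (h : IsBalancingWeights B lam) (p : Fin n) :
    ∑ i, (if p ∈ f i then (if f i ∈ B then lam (f i) else 0) else 0) = 1 := by
  rw [← h.2 p]
  have : B = (univ.filter fun i => f i ∈ B).image f := by
    ext S
    simp only [mem_image, mem_filter, mem_univ, true_and]
    constructor
    · intro hS
      obtain ⟨i, _, rfl⟩ := mem_image.1 (hB hS)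
      exact ⟨i, hS, rfl⟩
    · rintro ⟨i, hi, rfl⟩; exact hi
  conv_rhs => rw [this]
  rw [filter_image, sum_image (fun a _ b _ hab => hf hab), sum_filter, sum_filter]
  refine sum_congr rfl fun i _ => ?_
  by_cases h1 : p ∈ f i <;> by_cases h2 : f i ∈ B <;> simp [h1, h2]

theorem min_of_pos (hn : 2 ≤ n) (f : Fin n → Finset (Fin n)) (hP : Pos (vf f)) :
    IsMinimalBalancedCollection (univ.image f) ∧ #(univ.image f) = n := by
  obtain ⟨hG, l, c, hK, hl⟩ := hP
  rw [ker_vf] at hK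
  haveI : NeZero n := ⟨by omega⟩
  have hother : ∀ i : Fin n, ∃ j, j ≠ i := by
    haveI : Nontrivial (Fin n) := Fin.nontrivial_iff_two_le.2 hn
    exact fun i => exists_ne i
  have hne : ∀ i, f i ≠ ∅ := by
    intro i hi
    obtain ⟨j, hj⟩ := hother i
    have := (hG (fun k => if k = i then 1 else 0) 1 (by
      rw [ker_vf]; intro p
      have : ∀ k, (if p ∈ f k then (if k = i then (1:ℝ) else 0) else 0) = 0 := by
        intro k
        by_cases hk : k = i
        · subst hk; simp [hi]
        · simp [hk]
      simp_rw [this]; simp) ⟨j, by simp [hj]⟩).2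
    norm_num at this
  have hinj : Function.Injective f := by
    intro i j hij
    by_contra hne'
    have hv := (hG (fun k => (if k = i then l i else 0) - (if k = j then l i else 0) - l k) (-c) (by
      rw [ker_vf]; intro p
      have : ∀ k, (if p ∈ f k then ((if k = i then l i else 0) - (if k = j then l i else 0) - l k) else 0)
          = (if k = i then (if p ∈ f i then l i else 0) else 0)
            - (if k = j then (if p ∈ f i then l i else 0) else 0) - (if p ∈ f k then l k else 0) := by
        intro k
        by_cases hki : k = i
        · subst hki
          by_cases hp : p ∈ f k <;> simp [hp, hne']
        · by_cases hkj : k = j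
          · subst hkj
            rw [hij]
            by_cases hp : p ∈ f k <;> simp [hp, hki]
          · by_cases hp : p ∈ f k <;> simp [hp, hki, hkj]
      simp_rw [this]
      have h2 := hK p
      simp only [sum_sub_distrib, sum_ite_eq', mem_univ, if_true]
      linarith) ⟨i, by simp [hne']⟩).1
    have := congrFun hv j
    have h1 := hl i
    have h2 := hl j
    simp [Ne.symm hne'] at this
    linarith
  have hcard : #(univ.image f) = n := by
    rw [card_image_of_injective _ hinj]; simp
  refine ⟨⟨?_, ?_⟩, hcard⟩
  · have hκ : 0 < (∑ i, l i - c) / 2 := by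
      obtain ⟨p, hp⟩ := Finset.nonempty_iff_ne_empty.2 (hne 0)
      have h1 := hK p
      have h2 : l 0 ≤ ∑ i, (if p ∈ f i then l i else 0) := by
        have := Finset.single_le_sum (f := fun i => if p ∈ f i then l i else 0)
          (fun i _ => by split_ifs; exacts [(hl i).le, le_rfl]) (mem_univ (0 : Fin n))
        simpa [hp] using this
      have := hl 0
      linarith
    have := balanced_of_w f hinj hne l (fun i => (hl i).le) _ hκ (fun p => by
      have := hK p; linarith)
    rwa [filter_true_of_mem (fun i _ => hl i)] at this
  · rintro B' hB' ⟨_, lam, hlam⟩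
    have hw := w_of_balanced f hinj B' hB'.1 lam hlam
    have hz : ∃ i, f i ∉ B' := by
      by_contra hcon
      push Not at hcon
      apply hB'.2
      intro S hS
      obtain ⟨i, _, rfl⟩ := mem_image.1 hS
      exact hcon i
    obtain ⟨i, hi⟩ := hz
    have := (hG (fun i => if f i ∈ B' then lam (f i) else 0)
      (∑ i, (if f i ∈ B' then lam (f i) else 0) - 2) (by
        rw [ker_vf]; intro p; rw [hw p]; ring) ⟨i, by simp [hi]⟩).1
    have h1 := hw 0
    have h2 : ∀ k, (if f k ∈ B' then lam (f k) else 0) = 0 := fun k => congrFun this k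
    simp_rw [h2] at h1
    simp at h1

theorem good_aux (f : Fin n → Finset (Fin n)) (hf : Function.Injective f)
    (hM : IsMinimalBalancedCollection (univ.image f)) (l : Fin n → ℝ) (hl : ∀ i, 0 < l i)
    (h1 : ∀ p, ∑ i, (if p ∈ f i then l i else 0) = 1) (μ : Fin n → ℝ) (κ : ℝ)
    (h2 : ∀ p, ∑ i, (if p ∈ f i then μ i else 0) = κ) (i0 : Fin n) (hi0 : μ i0 = 0)
    (j : Fin n) (hj : μ j < 0) : False := by
  have hne : ∀ i, f i ≠ ∅ := fun i => hM.1.1 _ (mem_image_of_mem _ (mem_univ i))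
  obtain ⟨i1, hi1, hmin⟩ := Finset.exists_min_image (univ.filter fun i => μ i < 0)
    (fun i => l i / (- μ i)) ⟨j, by simp [hj]⟩
  have hi1' : μ i1 < 0 := (mem_filter.1 hi1).2
  set t := l i1 / (- μ i1) with ht
  have ht0 : 0 < t := div_pos (hl i1) (by linarith)
  have hz : l i1 + t * μ i1 = 0 := by
    have hq : μ i1 ≠ 0 := hi1'.ne
    rw [ht, div_neg, neg_mul, div_mul_cancel₀ _ hq]; ring
  have hw : ∀ i, 0 ≤ l i + t * μ i := by
    intro i
    by_cases hi : μ i < 0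
    · have := hmin i (by simp [hi])
      rw [le_div_iff₀ (by linarith)] at this
      linarith
    · have := mul_nonneg ht0.le (not_lt.1 hi)
      have := hl i
      linarith
  have hs : ∀ p, ∑ i, (if p ∈ f i then l i + t * μ i else 0) = 1 + t * κ := by
    intro p
    rw [← h1 p, ← h2 p, mul_sum, ← sum_add_distrib]
    refine sum_congr rfl fun i _ => ?_
    by_cases hp : p ∈ f i <;> simp [hp]
  have hκ : 0 < 1 + t * κ := by
    obtain ⟨p, hp⟩ := Finset.nonempty_iff_ne_empty.2 (hne i0)
    rw [← hs p]
    have := Finset.single_le_sum (f := fun i => if p ∈ f i then l i + t * μ i else 0)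
          (fun i _ => by split_ifs; exacts [hw i, le_rfl]) (mem_univ i0)
    simp only [hp, if_true, hi0, mul_zero, add_zero] at this
    have := hl i0
    linarith
  refine hM.2 _ ?_ (balanced_of_w f hf hne _ hw _ hκ hs)
  refine ⟨image_subset_image (filter_subset _ _), fun hsub => ?_⟩
  obtain ⟨k, hk, hkk⟩ := mem_image.1 (hsub (mem_image_of_mem f (mem_univ i1)))
  rw [hf hkk] at hk
  have := (mem_filter.1 hk).2
  linarith

theorem pos_of_min (f : Fin n → Finset (Fin n))
    (hM : IsMinimalBalancedCollection (univ.image f)) (hc : #(univ.image f) = n) :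
    Pos (vf f) := by
  have hf : Function.Injective f := by
    have := (Finset.card_image_iff (s := (univ : Finset (Fin n))) (f := f)).1 (by rw [hc]; simp)
    rwa [Finset.coe_univ, Set.injOn_univ] at this
  obtain ⟨lam, hlam⟩ := hM.1.2
  have hw := w_of_balanced f hf _ (subset_refl _) lam hlam
  have hmem : ∀ i, f i ∈ univ.image f := fun i => mem_image_of_mem _ (mem_univ i)
  simp only [hmem, if_true] at hw
  have hl : ∀ i, 0 < lam (f i) := fun i => hlam.1 _ (hmem i)
  refine ⟨?_, fun i => lam (f i), ∑ i, lam (f i) - 2, ?_, hl⟩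
  · rintro μ c hK ⟨i0, hi0⟩
    rw [ker_vf] at hK
    have h2 : ∀ p, ∑ i, (if p ∈ f i then μ i else 0) = (∑ i, μ i - c) / 2 := by
      intro p; have := hK p; linarith
    have hμ : μ = 0 := by
      funext j
      rcases lt_trichotomy (μ j) 0 with h | h | h
      · exact (good_aux f hf hM _ hl hw μ _ h2 i0 hi0 j h).elim
      · exact h
      · refine (good_aux f hf hM _ hl hw (fun i => - μ i) (-((∑ i, μ i - c) / 2)) ?_ i0
          (by simp [hi0]) j (by simpa using h)).elim
        intro p
        rw [← h2 p, ← sum_neg_distrib]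
        refine sum_congr rfl fun i _ => ?_
        by_cases hp : p ∈ f i <;> simp [hp]
    refine ⟨hμ, ?_⟩
    have := h2 i0
    simp [hμ] at this
    linarith
  · rw [ker_vf]
    intro p
    rw [hw p]; ring

theorem fiber_card (B : Finset (Finset (Fin n))) (hB : #B = n) :
    #{f : Fin n → Finset (Fin n) | univ.image f = B} = n.factorial := by
  have h1 : Fintype.card (Fin n ≃ {x // x ∈ B}) = n.factorial := by
    rw [Fintype.card_equiv (Fintype.equivOfCardEq (by simp [hB]))]
    simp
  rw [← h1, ← Finset.card_univ]
  symm
  refine Finset.card_bij (fun e _ => fun i => (e i).1) ?_ ?_ ?_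
  · intro e _
    simp only [mem_filter, mem_univ, true_and]
    ext S
    simp only [mem_image, mem_univ, true_and]
    constructor
    · rintro ⟨i, rfl⟩; exact (e i).2
    · intro hS; exact ⟨e.symm ⟨S, hS⟩, by simp⟩
  · intro e _ e' _ h
    ext i : 2
    exact congrFun h i
  · intro f hf
    have hf' : univ.image f = B := (mem_filter.1 hf).2
    have hinj : Function.Injective f := by
      have := (Finset.card_image_iff (s := (univ : Finset (Fin n))) (f := f)).1
        (by rw [hf', hB]; simp)
      rwa [Finset.coe_univ, Set.injOn_univ] at this
    refine ⟨Equiv.ofBijective (fun i => ⟨f i, hf' ▸ mem_image_of_mem f (mem_univ i)⟩) ⟨?_, ?_⟩,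
      mem_univ _, ?_⟩
    · intro i j hij
      exact hinj (congrArg Subtype.val hij)
    · rintro ⟨S, hS⟩
      rw [← hf'] at hS
      obtain ⟨i, _, rfl⟩ := mem_image.1 hS
      exact ⟨i, rfl⟩
    · rfl

open scoped Classical in
theorem Bnn_mul_factorial (hn : 2 ≤ n) :
    Bnn n * n.factorial = #{V : Fin n → Fin n → Bool | Pos V} := by
  set M : Finset (Finset (Finset (Fin n))) :=
    {B | IsMinimalBalancedCollection B ∧ #B = n} with hM
  have hB : Bnn n = #M := by
    unfold Bnn
    rw [Nat.card_eq_fintype_card, Fintype.card_subtype]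
    congr 1
    ext B
    simp only [hM, mem_filter, mem_univ, true_and]
    constructor
    · rintro ⟨h1, _, h2⟩; exact ⟨h1, h2⟩
    · rintro ⟨h1, h2⟩
      refine ⟨h1, ?_, h2⟩
      rintro rfl
      simp at h2
      omega
  have hF : #{f : Fin n → Finset (Fin n) | univ.image f ∈ M} = #M * n.factorial := by
    rw [Finset.card_eq_sum_card_fiberwise (f := fun f => univ.image f) (t := M)
      (fun f hf => by simpa using hf)]
    rw [Finset.sum_const_nat (m := n.factorial)]
    intro B hBM
    rw [← fiber_card B (mem_filter.1 hBM).2.2, filter_filter]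
    congr 1
    ext f
    simp only [mem_filter, mem_univ, true_and]
    constructor
    · exact fun h => h.2
    · intro h; exact ⟨h ▸ hBM, h⟩
  rw [hB, ← hF]
  refine Finset.card_bij (fun f _ => vf f) ?_ ?_ ?_
  · intro f hf
    simp only [mem_filter, mem_univ, true_and, hM] at hf ⊢
    exact pos_of_min f hf.1 hf.2
  · intro f _ g _ h
    funext i
    ext p
    have := congrFun (congrFun h p) i
    simpa [vf] using this
  · intro V hV
    have e : vf (fun i => univ.filter fun p => V p i = true) = V := by
      funext p i
      simp [vf]
    refine ⟨fun i => univ.filter fun p => V p i = true, ?_, e⟩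
    simp only [mem_filter, mem_univ, true_and, hM] at hV ⊢
    rw [← e] at hV
    exact min_of_pos hn _ hV
end Link

open scoped Classical in
theorem Bnn_ratio (n : ℕ) (hn : 2 ≤ n) :
    (Bnn n : ℝ) * (n.factorial : ℝ) / 2 ^ (n ^ 2 - n + 1) =
      1 - (#{V : Fin n → Fin n → Bool | ¬ Good V} : ℝ) / 2 ^ (n * n) := by
  haveI : Nonempty (Fin n) := ⟨⟨0, by omega⟩⟩
  have h1 : ((Bnn n * n.factorial : ℕ) : ℝ) = #{V : Fin n → Fin n → Bool | Pos V} := by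
    rw [Bnn_mul_factorial hn]
  have h2 := pos_count (ι := Fin n)
  have h3 := Finset.card_filter_add_card_filter_not (s := (univ : Finset (Fin n → Fin n → Bool)))
    (fun V => Good V)
  rw [Finset.card_univ] at h3
  have h4 : Fintype.card (Fin n → Fin n → Bool) = 2 ^ (n * n) := by
    simp [pow_mul]
  rw [h4] at h3
  simp only [Fintype.card_fin] at h2
  have h2' : (2:ℝ) ^ n * #{V : Fin n → Fin n → Bool | Pos V} =
    2 * #{V : Fin n → Fin n → Bool | Good V} := by exact_mod_cast h2
  have h3' : (#{V : Fin n → Fin n → Bool | Good V} : ℝ) +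
    #{V : Fin n → Fin n → Bool | ¬ Good V} = 2 ^ (n * n) := by exact_mod_cast h3
  push_cast at h1
  rw [h1]
  have h5 : (2:ℝ) ^ (n^2 - n + 1) * 2 ^ n = 2 * 2 ^ (n * n) := by
    rw [← pow_add, ← pow_succ']
    congr 1
    have : n ≤ n ^ 2 := Nat.le_self_pow (by norm_num) n
    rw [← sq]
    omega
  have p1 : (0:ℝ) < 2 ^ (n^2 - n + 1) := by positivity
  have p2 : (0:ℝ) < 2 ^ (n * n) := by positivity
  have p3 : (0:ℝ) < 2 ^ n := by positivity
  rw [eq_sub_iff_add_eq, div_add_div _ _ p1.ne' p2.ne', div_eq_one_iff_eq (by positivity)]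
  apply mul_right_cancel₀ p3.ne'
  linear_combination (2 ^ (n*n)) * h2' + (#{V : Fin n → Fin n → Bool | ¬ Good V} - 2 ^ (n*n)) * h5 + 2 * 2 ^ (n*n) * h3'

theorem err_tendsto :
    Filter.Tendsto (fun n : ℕ => (n:ℝ) * (57 * (9/10)^n + 18 * rr n)) Filter.atTop (nhds 0) := by
  have h1 : Filter.Tendsto (fun n : ℕ => (n:ℝ) * (9/10 : ℝ)^n) Filter.atTop (nhds 0) :=
    tendsto_self_mul_const_pow_of_lt_one (by norm_num) (by norm_num)
  have h2 : Filter.Tendsto (fun n : ℕ => Real.sqrt (72 * 18^3 / (n:ℝ))) Filter.atTop (nhds 0) := by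
    have : Filter.Tendsto (fun n : ℕ => (72 * 18^3 : ℝ) / (n:ℝ)) Filter.atTop (nhds 0) :=
      tendsto_const_div_atTop_nhds_zero_nat _
    have := (Real.continuous_sqrt.tendsto 0).comp this
    rw [Real.sqrt_zero] at this
    exact this
  have h3 : Filter.Tendsto (fun n : ℕ => 57 * ((n:ℝ) * (9/10 : ℝ)^n) +
      18 * Real.sqrt (72 * 18^3 / (n:ℝ))) Filter.atTop (nhds 0) := by
    have := (h1.const_mul 57).add (h2.const_mul 18)
    rwa [mul_zero, mul_zero, add_zero] at this
  refine h3.congr' ?_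
  filter_upwards [Filter.eventually_gt_atTop 0] with n hn
  have hn' : (0:ℝ) < n := by exact_mod_cast hn
  have : Real.sqrt (72 * 18^3 / (n:ℝ)) = n * rr n := by
    unfold rr
    have e : (72 * 18^3 / (n:ℝ)) = (n:ℝ)^2 * (72 * 18^3 / (n:ℝ)^3) := by
      field_simp
    rw [e, Real.sqrt_mul (by positivity), Real.sqrt_sq hn'.le]
  rw [this]; ring


/-- Theorem (Theorem `theo2`): `B_n^n ∼ 2^{n²−n+1}/n!`, i.e.
`lim_{n→∞} B_n^n · n! / 2^{n²−n+1} = 1`. -/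
theorem Bnn_asymptotic :
    Filter.Tendsto
      (fun n : ℕ => (Bnn n : ℝ) * (n.factorial : ℝ) / 2 ^ (n ^ 2 - n + 1))
      Filter.atTop (nhds 1) := by
  classical
  have hb : Filter.Tendsto (fun n : ℕ =>
      (#{V : Fin n → Fin n → Bool | ¬ Good V} : ℝ) / 2 ^ (n * n)) Filter.atTop (nhds 0) := by
    refine squeeze_zero' (Filter.Eventually.of_forall fun n => by positivity) ?_ err_tendsto
    filter_upwards [Filter.eventually_ge_atTop (24^9 * CC)] with n hn
    rw [div_le_iff₀ (by positivity)]
    have := bad_count (ι := Fin n) n (Fintype.card_fin n) hn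
    calc _ ≤ _ := by convert this
      _ = _ := by ring
  have h : Filter.Tendsto (fun n : ℕ =>
      1 - (#{V : Fin n → Fin n → Bool | ¬ Good V} : ℝ) / 2 ^ (n * n)) Filter.atTop (nhds 1) := by
    simpa using hb.const_sub 1
  refine h.congr' ?_
  filter_upwards [Filter.eventually_ge_atTop 2] with n hn
  rw [Bnn_ratio n hn]
end
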